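/- Let Ω ⊆ ℝ³ be a domain and let (ρ, u) be a weak solution of the stationary barotropic Navier–Stokes system on Ω with pressure p and potential G. Assume p : [0,∞) → ℝ is continuous, p(0) = 0, p(s) ≥ 0 for all s ≥ 0, p is continuously differentiable on (0,∞) with p′(s) ≥ 0 for all s > 0, and for some γ > 1 one has liminf_{s→0⁺} P(s)/p(s) > 0 and liminf_{s→0⁺} p(s)/s^γ > 0, where P is the pressure potential associated with p. Assume either γ > 6/5 and G ∈ D₀^{1,q}(Ω) for some 6/5 ≤ q ≤ 6γ/(5γ−6), or 1 < γ ≤ 6/5 and (G ∈ D₀^{1,q}(Ω) for some 6/5 ≤ q < ∞ or G ∈ W^{1,∞}(Ω)). If ρ ∈ L^∞(Ω) and the total energy is finite, i.e. ∫_Ω ( (1/2) ρ|u|² + P(ρ) ) dx < ∞, then u = 0 almost everywhere in Ω. -/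

import Mathlib

noncomputable section

open MeasureTheory Metric Filter Topology Set

/-- Three-dimensional Euclidean space. -/
abbrev E3 : Type := EuclideanSpace ℝ (Fin 3)

/-- Partial derivative of a scalar function in the `i`-th coordinate direction. -/
def pd (f : E3 → ℝ) (i : Fin 3) : E3 → ℝ :=
  fun x => fderiv ℝ f x (EuclideanSpace.single i 1)

/-- Classical gradient matrix of a vector field: `(tgrad φ x) i j = ∂_j φ_i (x)`. -/
def tgrad (φ : E3 → Fin 3 → ℝ) (x : E3) : Fin 3 → Fin 3 → ℝ :=
  fun i j => pd (fun y => φ y i) j x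

/-- Smooth compactly supported scalar test function with support in `Ω`. -/
def IsTest (Ω : Set E3) (φ : E3 → ℝ) : Prop :=
  ContDiff ℝ ((⊤ : ℕ∞) : WithTop ℕ∞) φ ∧ HasCompactSupport φ ∧ tsupport φ ⊆ Ω

/-- `C^n` compactly supported vector-valued test function with support in `Ω`. -/
def IsTestVec (n : WithTop ℕ∞) (Ω : Set E3) (φ : E3 → Fin 3 → ℝ) : Prop :=
  ContDiff ℝ n φ ∧ HasCompactSupport φ ∧ tsupport φ ⊆ Ω

/-- The Newtonian viscous stress tensor
`S(M) = μ (M + Mᵗ - (2/3) (tr M) I) + η (tr M) I`. -/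
def Smat (μ η : ℝ) (M : Fin 3 → Fin 3 → ℝ) : Fin 3 → Fin 3 → ℝ :=
  fun i j =>
    μ * (M i j + M j i - (2 / 3) * (∑ k, M k k) * (if i = j then (1 : ℝ) else 0))
      + η * (∑ k, M k k) * (if i = j then (1 : ℝ) else 0)

/-- `dG` is the weak gradient of the scalar function `G` on `Ω`. -/
def HasWeakGradOn (Ω : Set E3) (G : E3 → ℝ) (dG : E3 → Fin 3 → ℝ) : Prop :=
  ∀ φ : E3 → ℝ, IsTest Ω φ → ∀ i : Fin 3,
    ∫ x in Ω, G x * pd φ i x = - ∫ x in Ω, dG x i * φ x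

/-- `du` is the weak gradient (Jacobian) of the vector field `u` on `Ω`. -/
def HasWeakGradVecOn (Ω : Set E3) (u : E3 → Fin 3 → ℝ) (du : E3 → Fin 3 → Fin 3 → ℝ) : Prop :=
  ∀ φ : E3 → ℝ, IsTest Ω φ → ∀ i j : Fin 3,
    ∫ x in Ω, u x i * pd φ j x = - ∫ x in Ω, du x i j * φ x

/-- `u ∈ D₀^{1,2}(Ω; ℝ³)` with weak gradient `du`: `u` is locally integrable on `Ω`, its weak
gradient belongs to `L²(Ω)`, and `u` can be approximated by smooth compactly supported fields
`uₙ` with `∇uₙ → ∇u` in `L²(Ω)` and `uₙ → u` in `L⁶(Ω)`. -/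
def MemD012 (Ω : Set E3) (u : E3 → Fin 3 → ℝ) (du : E3 → Fin 3 → Fin 3 → ℝ) : Prop :=
  LocallyIntegrableOn u Ω volume ∧
  HasWeakGradVecOn Ω u du ∧
  MemLp du 2 (volume.restrict Ω) ∧
  ∃ un : ℕ → E3 → Fin 3 → ℝ,
    (∀ n, IsTestVec ((⊤ : ℕ∞) : WithTop ℕ∞) Ω (un n)) ∧
    Tendsto (fun n => eLpNorm (fun x => tgrad (un n) x - du x) 2 (volume.restrict Ω))
      atTop (𝓝 0) ∧
    Tendsto (fun n => eLpNorm (fun x => un n x - u x) 6 (volume.restrict Ω)) atTop (𝓝 0)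

/-- `G ∈ D₀^{1,q}(Ω)` with weak gradient `dG`. -/
def MemD01q (Ω : Set E3) (G : E3 → ℝ) (dG : E3 → Fin 3 → ℝ) (q : ℝ) : Prop :=
  HasWeakGradOn Ω G dG ∧
  MemLp dG (ENNReal.ofReal q) (volume.restrict Ω) ∧
  ∃ Gn : ℕ → E3 → ℝ,
    (∀ n, IsTest Ω (Gn n)) ∧
    Tendsto (fun n =>
        eLpNorm (fun x => (fun i => pd (Gn n) i x) - dG x) (ENNReal.ofReal q)
          (volume.restrict Ω)) atTop (𝓝 0) ∧
    ∀ K : Set E3, IsCompact K → K ⊆ Ω →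
      Tendsto (fun n => ∫ x in K, |Gn n x - G x|) atTop (𝓝 0)

/-- `G ∈ W^{1,∞}(Ω)` with weak gradient `dG`: both `G` and `∇G` are essentially bounded. -/
def MemW1inf (Ω : Set E3) (G : E3 → ℝ) (dG : E3 → Fin 3 → ℝ) : Prop :=
  HasWeakGradOn Ω G dG ∧
  MemLp G ⊤ (volume.restrict Ω) ∧ MemLp dG ⊤ (volume.restrict Ω)

/-- Weak solution `(ρ, u)` (with weak gradient `du` of `u` and weak gradient `dG` of `G`) of the
stationary barotropic Navier–Stokes system
`div(ρu) = 0`, `div(ρ u⊗u) + ∇p(ρ) − div S(∇u) = ρ∇G` on `Ω` with no-slip boundary condition. -/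
structure WeakSolution (Ω : Set E3) (μ η : ℝ) (p : ℝ → ℝ)
    (G : E3 → ℝ) (dG : E3 → Fin 3 → ℝ)
    (ρ : E3 → ℝ) (u : E3 → Fin 3 → ℝ) (du : E3 → Fin 3 → Fin 3 → ℝ) : Prop where
  aemeas_ρ : AEMeasurable ρ volume
  aemeas_u : AEMeasurable u volume
  weakGrad_G : HasWeakGradOn Ω G dG
  ρ_nonneg : ∀ᵐ x ∂(volume.restrict Ω), 0 ≤ ρ x
  ρu_locInt : LocallyIntegrableOn (fun x => fun i => ρ x * u x i) (closure Ω) volume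
  mass : ∀ φ : E3 → ℝ, ContDiff ℝ ((⊤ : ℕ∞) : WithTop ℕ∞) φ → HasCompactSupport φ →
    ∫ x in Ω, ρ x * (∑ i, u x i * pd φ i x) = 0
  ρ_locInt : LocallyIntegrableOn ρ Ω volume
  ρu2_locInt : LocallyIntegrableOn (fun x => ρ x * (∑ i, (u x i) ^ 2)) Ω volume
  pρ_locInt : LocallyIntegrableOn (fun x => p (ρ x)) Ω volume
  ρdG_locInt : LocallyIntegrableOn (fun x => fun i => ρ x * dG x i) Ω volume
  u_D012 : MemD012 Ω u du
  momentum : ∀ φ : E3 → Fin 3 → ℝ, IsTestVec 1 Ω φ →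
    ∫ x in Ω, ((∑ i, ∑ j, ρ x * u x i * u x j * tgrad φ x i j)
        + p (ρ x) * (∑ i, tgrad φ x i i))
      = (∫ x in Ω, ∑ i, ∑ j, Smat μ η (du x) i j * tgrad φ x i j)
        - ∫ x in Ω, ∑ i, ρ x * dG x i * φ x i

/-- **Theorem 2 (finite energy).** Suppose the pressure `p` is continuous with `p(0) = 0`,
`p ≥ 0`, is `C¹` on `(0,∞)` with `p′ ≥ 0`, and for some `γ > 1` one has
`liminf_{s→0⁺} P(s)/p(s) > 0` and `liminf_{s→0⁺} p(s)/s^γ > 0`, where `P` is the pressure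
potential (`P(0) = 0`, `s·P′(s) − P(s) = p(s)`). Assume the stated conditions on `G`
according to whether `γ > 6/5` or `1 < γ ≤ 6/5`. If `ρ ∈ L^∞(Ω)` and the total energy
`∫_Ω ((1/2) ρ|u|² + P(ρ))` is finite, then `u = 0` a.e. in `Ω`. -/

lemma pd_hasCompactSupport {f : E3 → ℝ} (h : HasCompactSupport f) (i : Fin 3) :
    HasCompactSupport (pd f i) := by
  have := h.fderiv_apply (𝕜 := ℝ) (EuclideanSpace.single i 1)
  exact this

lemma pd_continuous {f : E3 → ℝ} (h : ContDiff ℝ 1 f) (i : Fin 3) : Continuous (pd f i) := by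
  unfold pd
  exact (h.continuous_fderiv one_ne_zero).clm_apply continuous_const

lemma pd_smooth {f : E3 → ℝ} (h : ContDiff ℝ ((⊤ : ℕ∞) : WithTop ℕ∞) f) (i : Fin 3) :
    ContDiff ℝ ((⊤ : ℕ∞) : WithTop ℕ∞) (pd f i) := by
  unfold pd
  exact (h.fderiv_right (m := ((⊤ : ℕ∞) : WithTop ℕ∞)) (by simp)).clm_apply contDiff_const

lemma smooth_one {f : E3 → ℝ} (h : ContDiff ℝ ((⊤ : ℕ∞) : WithTop ℕ∞) f) : ContDiff ℝ 1 f :=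
  h.of_le (by exact_mod_cast le_top)

lemma pd_tsupport {f : E3 → ℝ} (i : Fin 3) : tsupport (pd f i) ⊆ tsupport f := by
  refine closure_minimal ?_ (isClosed_tsupport f)
  intro x hx
  by_contra hn
  apply hx
  have : fderiv ℝ f x = 0 := by
    have := support_fderiv_subset ℝ (f := f)
    by_contra h
    exact hn (this h)
  simp [pd, this]

lemma pd_mul {f g : E3 → ℝ} {x : E3} (hf : DifferentiableAt ℝ f x) (hg : DifferentiableAt ℝ g x)
    (i : Fin 3) : pd (fun y => f y * g y) i x = f x * pd g i x + g x * pd f i x := by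
  unfold pd
  rw [fderiv_fun_mul hf hg]
  simp

lemma pd_comp {f : E3 → ℝ} {h : ℝ → ℝ} {h' : ℝ} {x : E3} (hf : DifferentiableAt ℝ f x)
    (hh : HasDerivAt h h' (f x)) (i : Fin 3) : pd (fun y => h (f y)) i x = h' * pd f i x := by
  unfold pd
  have := (hh.comp_hasFDerivAt x hf.hasFDerivAt).fderiv
  have h2 : (h ∘ f) = fun y => h (f y) := rfl
  rw [h2] at this
  rw [this]
  simp

lemma pd_sum {ι : Type*} (s : Finset ι) {f : ι → E3 → ℝ} {x : E3}
    (hf : ∀ k ∈ s, DifferentiableAt ℝ (f k) x)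
    (i : Fin 3) : pd (fun y => ∑ k ∈ s, f k y) i x = ∑ k ∈ s, pd (f k) i x := by
  unfold pd
  rw [fderiv_fun_sum hf]
  simp

lemma pd_add {f g : E3 → ℝ} {x : E3} (hf : DifferentiableAt ℝ f x) (hg : DifferentiableAt ℝ g x)
    (i : Fin 3) : pd (fun y => f y + g y) i x = pd f i x + pd g i x := by
  unfold pd
  rw [fderiv_fun_add hf hg]
  simp

lemma pd_comm {f : E3 → ℝ} (h : ContDiff ℝ ((⊤ : ℕ∞) : WithTop ℕ∞) f) (i j : Fin 3) (x : E3) :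
    pd (pd f i) j x = pd (pd f j) i x := by
  have hs : IsSymmSndFDerivAt ℝ f x :=
    h.contDiffAt.isSymmSndFDerivAt (by simp only [minSmoothness_of_isRCLikeNormedField]; exact WithTop.coe_le_coe.2 (show ((2:ℕ∞)) ≤ ⊤ from le_top))
  have hd : DifferentiableAt ℝ (fderiv ℝ f) x :=
    ((h.fderiv_right (m := ((⊤ : ℕ∞) : WithTop ℕ∞)) (by simp)).differentiable (by simp)) x
  unfold pd
  rw [fderiv_clm_apply hd (differentiableAt_const _), fderiv_clm_apply hd (differentiableAt_const _)]
  simp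
  exact hs _ _

/-- Integration by parts with one compactly supported factor. -/
lemma ibp {a ψ : E3 → ℝ} (ha : ContDiff ℝ 1 a) (hψ : ContDiff ℝ 1 ψ) (hc : HasCompactSupport ψ)
    (i : Fin 3) : ∫ x, a x * pd ψ i x = - ∫ x, pd a i x * ψ x := by
  have h1 := (pd_continuous ha i)
  have h2 := (pd_continuous hψ i)
  refine integral_mul_fderiv_eq_neg_fderiv_mul_of_integrable ?_ ?_ ?_ ?_ ?_
  · exact (h1.mul hψ.continuous).integrable_of_hasCompactSupport hc.mul_left
  · exact (ha.continuous.mul h2).integrable_of_hasCompactSupport (pd_hasCompactSupport hc i).mul_left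
  · exact (ha.continuous.mul hψ.continuous).integrable_of_hasCompactSupport hc.mul_left
  · intro x _; exact (ha.differentiable one_ne_zero) x
  · intro x _; exact (hψ.differentiable one_ne_zero) x

section general
variable {α : Type*} [MeasurableSpace α] {ν : Measure α}

lemma integrable_mul_Lp {p q : ENNReal} [ENNReal.HolderConjugate p q] {F g : α → ℝ}
    (hF : MemLp F p ν) (hg : MemLp g q ν) : Integrable (fun x => F x * g x) ν := by
  have := hF.mul' (r := 1) hg (hpqr := (inferInstance : ENNReal.HolderTriple q p 1))
  rw [← memLp_one_iff_integrable]
  exact (this.congr_norm (by simpa [mul_comm] using this.1) (by simp [mul_comm]))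

lemma holder_abs {p q : ENNReal} [ENNReal.HolderConjugate p q] {F g : α → ℝ}
    (hF : MemLp F p ν) (hg : MemLp g q ν) :
    |∫ x, F x * g x ∂ν| ≤ (eLpNorm F p ν).toReal * (eLpNorm g q ν).toReal := by
  have h1 : eLpNorm (fun x => F x * g x) 1 ν ≤ eLpNorm F p ν * eLpNorm g q ν := by
    have := eLpNorm_smul_le_mul_eLpNorm (p := p) (q := q) (r := 1) hg.1 hF.1
    exact this
  have hi := integrable_mul_Lp hF hg
  calc |∫ x, F x * g x ∂ν| ≤ ∫ x, ‖F x * g x‖ ∂ν := by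
        rw [← Real.norm_eq_abs]; exact norm_integral_le_integral_norm _
    _ = (eLpNorm (fun x => F x * g x) 1 ν).toReal := by
        rw [integral_norm_eq_lintegral_enorm hi.1, eLpNorm_one_eq_lintegral_enorm]
    _ ≤ _ := by
        rw [← ENNReal.toReal_mul]
        exact ENNReal.toReal_mono (ENNReal.mul_ne_top hF.2.ne hg.2.ne) h1

lemma memLp_bdd_mul {p : ENNReal} {F c : α → ℝ} {C : ℝ} (hF : MemLp F p ν)
    (hc : AEStronglyMeasurable c ν) (hC : ∀ᵐ x ∂ν, |c x| ≤ C) :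
    MemLp (fun x => F x * c x) p ν := by
  refine MemLp.of_le_mul (c := C) hF (hF.1.mul hc) ?_
  filter_upwards [hC] with x hx
  rw [Real.norm_eq_abs, abs_mul, Real.norm_eq_abs, mul_comm]
  exact mul_le_mul_of_nonneg_right hx (abs_nonneg _)

/-- Weak-strong convergence with bounded a.e. converging coefficients. -/
lemma conv_bdd {p q : ENNReal} [ENNReal.HolderConjugate p q] {F g : α → ℝ} {gn cn : ℕ → α → ℝ}
    {c : α → ℝ} {C : ℝ}
    (hF : MemLp F p ν) (hg : MemLp g q ν) (hgn : ∀ n, MemLp (gn n) q ν)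
    (hlim : Tendsto (fun n => eLpNorm (fun x => gn n x - g x) q ν) atTop (𝓝 0))
    (hcn : ∀ n, AEStronglyMeasurable (cn n) ν) (hC : ∀ n, ∀ᵐ x ∂ν, |cn n x| ≤ C)
    (hc : ∀ᵐ x ∂ν, Tendsto (fun n => cn n x) atTop (𝓝 (c x))) :
    Tendsto (fun n => ∫ x, F x * cn n x * gn n x ∂ν) atTop (𝓝 (∫ x, F x * c x * g x ∂ν)) := by
  have hd : ∀ n, MemLp (fun x => gn n x - g x) q ν := fun n => (hgn n).sub hg
  have e1 : ∀ n, ∫ x, F x * cn n x * gn n x ∂ν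
      = ∫ x, F x * ((gn n x - g x) * cn n x) ∂ν + ∫ x, F x * cn n x * g x ∂ν := by
    intro n
    rw [← integral_add]
    · congr 1; ext x; ring
    · exact integrable_mul_Lp hF (memLp_bdd_mul (hd n) (hcn n) (hC n))
    · exact integrable_mul_Lp (memLp_bdd_mul hF (hcn n) (hC n)) hg
  simp_rw [e1]
  rw [show (∫ x, F x * c x * g x ∂ν) = 0 + ∫ x, F x * c x * g x ∂ν by ring]
  refine Tendsto.add ?_ ?_
  · have hb : ∀ n, |∫ x, F x * ((gn n x - g x) * cn n x) ∂ν|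
        ≤ (eLpNorm F p ν).toReal * (|C| * (eLpNorm (fun x => gn n x - g x) q ν).toReal) := by
      intro n
      refine (holder_abs hF (memLp_bdd_mul (hd n) (hcn n) (hC n))).trans ?_
      refine mul_le_mul_of_nonneg_left ?_ ENNReal.toReal_nonneg
      have : eLpNorm (fun x => (gn n x - g x) * cn n x) q ν
          ≤ ENNReal.ofReal |C| * eLpNorm (fun x => gn n x - g x) q ν := by
        refine eLpNorm_le_mul_eLpNorm_of_ae_le_mul ?_ q
        filter_upwards [hC n] with x hx
        rw [norm_mul, mul_comm]
        exact mul_le_mul_of_nonneg_right (hx.trans (le_abs_self C)) (norm_nonneg _)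
      have h2 := ENNReal.toReal_mono (ENNReal.mul_ne_top ENNReal.ofReal_ne_top (hd n).2.ne) this
      rwa [ENNReal.toReal_mul, ENNReal.toReal_ofReal (abs_nonneg C)] at h2
    have hl : Tendsto (fun n => (eLpNorm F p ν).toReal *
        (|C| * (eLpNorm (fun x => gn n x - g x) q ν).toReal)) atTop (𝓝 0) := by
      have := (ENNReal.tendsto_toReal ENNReal.zero_ne_top).comp hlim
      have := (this.const_mul |C|).const_mul (eLpNorm F p ν).toReal
      simpa using this
    exact squeeze_zero_norm (fun n => by simpa using hb n) hl
  · refine tendsto_integral_of_dominated_convergence (fun x => |C| * |F x * g x|) ?_ ?_ ?_ ?_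
    · intro n; exact (hF.1.mul (hcn n)).mul hg.1
    · exact ((integrable_mul_Lp hF hg).abs).const_mul _
    · intro n
      filter_upwards [hC n] with x hx
      rw [Real.norm_eq_abs, show F x * cn n x * g x = cn n x * (F x * g x) by ring, abs_mul]
      exact mul_le_mul_of_nonneg_right (hx.trans (le_abs_self C)) (abs_nonneg _)
    · filter_upwards [hc] with x hx
      exact (hx.const_mul _).mul_const _

lemma conv_Lp {p q : ENNReal} [ENNReal.HolderConjugate p q] {F g : α → ℝ} {gn : ℕ → α → ℝ}
    (hF : MemLp F p ν) (hg : MemLp g q ν) (hgn : ∀ n, MemLp (gn n) q ν)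
    (hlim : Tendsto (fun n => eLpNorm (fun x => gn n x - g x) q ν) atTop (𝓝 0)) :
    Tendsto (fun n => ∫ x, F x * gn n x ∂ν) atTop (𝓝 (∫ x, F x * g x ∂ν)) := by
  have := conv_bdd (cn := fun _ _ => 1) (c := fun _ => 1) (C := 1) hF hg hgn hlim
    (fun n => aestronglyMeasurable_const) (by simp) (by simp)
  simpa using this

/-- Product of two strongly converging sequences. -/
lemma conv_Lp2 {p q : ENNReal} [ENNReal.HolderConjugate p q] {f g : α → ℝ} {fn gn : ℕ → α → ℝ}
    (hf : MemLp f p ν) (hfn : ∀ n, MemLp (fn n) p ν)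
    (hflim : Tendsto (fun n => eLpNorm (fun x => fn n x - f x) p ν) atTop (𝓝 0))
    (hg : MemLp g q ν) (hgn : ∀ n, MemLp (gn n) q ν)
    (hlim : Tendsto (fun n => eLpNorm (fun x => gn n x - g x) q ν) atTop (𝓝 0)) :
    Tendsto (fun n => ∫ x, fn n x * gn n x ∂ν) atTop (𝓝 (∫ x, f x * g x ∂ν)) := by
  have hd : ∀ n, MemLp (fun x => gn n x - g x) q ν := fun n => (hgn n).sub hg
  have hdf : ∀ n, MemLp (fun x => fn n x - f x) p ν := fun n => (hfn n).sub hf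
  have h1 := conv_Lp hf hg hgn hlim
  have h2 := conv_Lp (p := q) (q := p) hg hf hfn hflim
  have e : ∀ n, ∫ x, fn n x * gn n x ∂ν = ∫ x, f x * gn n x ∂ν
      + (∫ x, g x * fn n x ∂ν - ∫ x, g x * f x ∂ν)
      + ∫ x, (fn n x - f x) * (gn n x - g x) ∂ν := by
    intro n
    have i1 := integrable_mul_Lp hf (hgn n)
    have i2 := integrable_mul_Lp (p := q) (q := p) hg (hfn n)
    have i3 := integrable_mul_Lp (p := q) (q := p) hg hf
    have i4 := integrable_mul_Lp (hdf n) (hd n)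
    have i5 : Integrable (fun x => g x * fn n x - g x * f x) ν := i2.sub i3
    have i6 : Integrable (fun x => f x * gn n x + (g x * fn n x - g x * f x)) ν := i1.add i5
    rw [← integral_sub i2 i3, ← integral_add i1 i5, ← integral_add i6 i4]
    congr 1; ext x; ring
  simp_rw [e]
  have h3 : Tendsto (fun n => ∫ x, (fn n x - f x) * (gn n x - g x) ∂ν) atTop (𝓝 0) := by
    refine squeeze_zero_norm (fun n => holder_abs (hdf n) (hd n)) ?_
    have a := (ENNReal.tendsto_toReal ENNReal.zero_ne_top).comp hlim
    have b := (ENNReal.tendsto_toReal ENNReal.zero_ne_top).comp hflim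
    simpa using b.mul a
  have := (h1.add (h2.sub_const (∫ x, g x * f x ∂ν))).add h3
  simpa using this

lemma memLp_interp {p q r : ENNReal} {f : α → ℝ} (hp : MemLp f p ν) (hr : MemLp f r ν)
    (hp0 : p ≠ 0) (hrt : r ≠ ⊤) (hpq : p ≤ q) (hqr : q ≤ r) : MemLp f q ν := by
  have hqt : q ≠ ⊤ := ne_top_of_le_ne_top hrt hqr
  have hq0 : q ≠ 0 := fun h => hp0 (le_antisymm (h ▸ hpq) zero_le)
  have hpt : p ≠ ⊤ := ne_top_of_le_ne_top hqt hpq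
  have hr0 : r ≠ 0 := fun h => hq0 (le_antisymm (h ▸ hqr) zero_le)
  refine ⟨hp.1, ?_⟩
  have h1 := lintegral_rpow_enorm_lt_top_of_eLpNorm_lt_top hp0 hpt hp.2
  have h2 := lintegral_rpow_enorm_lt_top_of_eLpNorm_lt_top hr0 hrt hr.2
  rw [eLpNorm_lt_top_iff_lintegral_rpow_enorm_lt_top hq0 hqt]
  have hpq' := ENNReal.toReal_mono hqt hpq
  have hqr' := ENNReal.toReal_mono hrt hqr
  calc ∫⁻ a, ‖f a‖ₑ ^ q.toReal ∂ν ≤ ∫⁻ a, (‖f a‖ₑ ^ p.toReal + ‖f a‖ₑ ^ r.toReal) ∂ν := by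
        refine lintegral_mono fun x => ?_
        rcases le_total ‖f x‖ₑ 1 with h | h
        · exact (ENNReal.rpow_le_rpow_of_exponent_ge h hpq').trans le_self_add
        · exact (ENNReal.rpow_le_rpow_of_exponent_le h hqr').trans le_add_self
    _ = _ := lintegral_add_left' (by have := hp.1.enorm; fun_prop) _
    _ < ⊤ := ENNReal.add_lt_top.2 ⟨h1, h2⟩

end general


lemma exists_kernel : ∃ k : E3 → ℝ, ContDiff ℝ ((⊤ : ℕ∞) : WithTop ℕ∞) k ∧ (∀ x, 0 ≤ k x) ∧
    tsupport k = closedBall 0 1 ∧ ∫ x, k x = 1 := by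
  let f : ContDiffBump (0 : E3) := ⟨1/2, 1, by norm_num, by norm_num⟩
  exact ⟨f.normed volume, f.contDiff_normed, f.nonneg_normed, f.tsupport_normed_eq,
    f.integral_normed⟩

/-- The reference mollifier. -/
def ker0 : E3 → ℝ := exists_kernel.choose
lemma ker0_smooth : ContDiff ℝ ((⊤ : ℕ∞) : WithTop ℕ∞) ker0 := exists_kernel.choose_spec.1
lemma ker0_nonneg (x : E3) : 0 ≤ ker0 x := exists_kernel.choose_spec.2.1 x
lemma ker0_tsupport : tsupport ker0 = closedBall 0 1 := exists_kernel.choose_spec.2.2.1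
lemma ker0_integral : ∫ x, ker0 x = 1 := exists_kernel.choose_spec.2.2.2
lemma ker0_compact : HasCompactSupport ker0 := by
  rw [HasCompactSupport, ker0_tsupport]; exact isCompact_closedBall _ _

/-- The mollification scale. -/
def eps (n : ℕ) : ℝ := 1 / ((n : ℝ) + 1)
lemma eps_pos (n : ℕ) : 0 < eps n := by unfold eps; positivity
lemma eps_tendsto : Tendsto eps atTop (𝓝 0) := tendsto_one_div_add_atTop_nhds_zero_nat
lemma eps_le_one (n : ℕ) : eps n ≤ 1 := by
  unfold eps; rw [div_le_one (by positivity)]; linarith [n.cast_nonneg (α := ℝ)]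

/-- The scaled mollifier. -/
def mker (n : ℕ) (x : E3) : ℝ := (eps n)⁻¹ ^ 3 * ker0 ((eps n)⁻¹ • x)

lemma mker_smooth (n : ℕ) : ContDiff ℝ ((⊤ : ℕ∞) : WithTop ℕ∞) (mker n) :=
  contDiff_const.mul (ker0_smooth.comp (contDiff_const_smul _))
lemma mker_nonneg (n : ℕ) (x : E3) : 0 ≤ mker n x :=
  mul_nonneg (pow_nonneg (inv_nonneg.2 (eps_pos n).le) _) (ker0_nonneg _)
lemma mker_integral (n : ℕ) : ∫ x, mker n x = 1 := by
  unfold mker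
  rw [integral_const_mul, Measure.integral_comp_smul, ker0_integral]
  have := eps_pos n
  simp
  rw [abs_of_pos this]; field_simp
lemma ker0_zero {x : E3} (h : 1 < ‖x‖) : ker0 x = 0 := by
  apply image_eq_zero_of_notMem_tsupport
  rw [ker0_tsupport]; simpa using h
lemma pd_ker0_zero {x : E3} (i : Fin 3) (h : 1 < ‖x‖) : pd ker0 i x = 0 := by
  apply image_eq_zero_of_notMem_tsupport
  intro h'
  have := pd_tsupport i h'
  rw [ker0_tsupport] at this; simp at this; linarith
lemma scale_norm {n : ℕ} {x : E3} (h : eps n < ‖x‖) : 1 < ‖(eps n)⁻¹ • x‖ := by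
  have := eps_pos n
  rw [norm_smul, norm_inv, Real.norm_of_nonneg this.le, lt_inv_mul_iff₀ this]; simpa
lemma mker_zero {n : ℕ} {x : E3} (h : eps n < ‖x‖) : mker n x = 0 := by
  unfold mker; rw [ker0_zero (scale_norm h)]; simp
lemma pd_mker (n : ℕ) (i : Fin 3) (x : E3) :
    pd (mker n) i x = (eps n)⁻¹ ^ 4 * pd ker0 i ((eps n)⁻¹ • x) := by
  unfold pd mker
  have hd : DifferentiableAt ℝ (fun x : E3 => ker0 ((eps n)⁻¹ • x)) x :=
    ((ker0_smooth.comp (contDiff_const_smul _)).differentiable (by simp)) x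
  rw [fderiv_const_mul hd]
  have := fderiv_comp_smul (𝕜 := ℝ) (f := ker0) (c := (eps n)⁻¹) (x := x)
  rw [this]
  simp; ring
lemma pd_mker_zero {n : ℕ} (i : Fin 3) {x : E3} (h : eps n < ‖x‖) : pd (mker n) i x = 0 := by
  rw [pd_mker, pd_ker0_zero i (scale_norm h)]; simp
lemma mker_compact (n : ℕ) : HasCompactSupport (mker n) := by
  refine HasCompactSupport.intro (isCompact_closedBall (0 : E3) (eps n)) ?_
  intro x hx
  exact mker_zero (by simpa using hx)

lemma exists_bound_ker : ∃ C : ℝ, 0 ≤ C ∧ (∀ x, |ker0 x| ≤ C) ∧ ∀ i x, |pd ker0 i x| ≤ C := by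
  obtain ⟨C, hC⟩ := ker0_compact.exists_bound_of_continuous ker0_smooth.continuous
  have h : ∀ i : Fin 3, ∃ C, ∀ x, ‖pd ker0 i x‖ ≤ C := fun i =>
    (pd_hasCompactSupport ker0_compact i).exists_bound_of_continuous
      (pd_continuous (smooth_one ker0_smooth) i)
  choose D hD using h
  refine ⟨|C| + ∑ i, |D i|, by positivity, fun x => ?_, fun i x => ?_⟩
  · refine (hC x).trans ((le_abs_self C).trans ?_)
    have : 0 ≤ ∑ i, |D i| := by positivity
    linarith
  · refine (hD i x).trans ((le_abs_self _).trans ?_)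
    have := Finset.single_le_sum (f := fun i => |D i|) (fun j _ => abs_nonneg _) (Finset.mem_univ i)
    linarith [abs_nonneg C]

/-- Lebesgue-point convergence for kernels of size `C e⁻³` supported in the ball of radius `e`. -/
lemma lebesgue_kernel {f : E3 → ℝ} (hf : LocallyIntegrable f volume) :
    ∀ᵐ y, ∀ (K : ℕ → E3 → ℝ) (C : ℝ),
      (∀ n z, |K n z| ≤ C * (eps n)⁻¹ ^ 3) → (∀ n z, eps n < ‖z‖ → K n z = 0) →
      Tendsto (fun n => ∫ t, K n (y - t) * (f t - f y)) atTop (𝓝 0) := by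
  filter_upwards [IsUnifLocDoublingMeasure.ae_tendsto_average_norm_sub volume hf 1] with y hy K C hC h0
  have h1 := hy (l := atTop) (fun _ : ℕ => y) eps
    (tendsto_nhdsWithin_iff.2 ⟨eps_tendsto, Eventually.of_forall eps_pos⟩)
    (Eventually.of_forall fun n => by simp [(eps_pos n).le])
  set V := (volume : Measure E3).real (closedBall 0 1) with hV
  have hVn : ∀ n, (volume : Measure E3).real (closedBall y (eps n)) = (eps n) ^ 3 * V := by
    intro n
    rw [Measure.real, Measure.addHaar_closedBall' _ _ (eps_pos n).le, hV, Measure.real,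
      ENNReal.toReal_mul, ENNReal.toReal_ofReal (by have := eps_pos n; positivity)]
    simp
  have hVpos : 0 < V := by
    rw [hV]
    exact ENNReal.toReal_pos (measure_closedBall_pos _ _ one_pos).ne' measure_closedBall_lt_top.ne
  have hintg : ∀ n, IntegrableOn (fun t => ‖f t - f y‖) (closedBall y (eps n)) := by
    intro n
    have : LocallyIntegrable (fun t => f t - f y) := hf.sub (locallyIntegrable_const _)
    exact (this.integrableOn_isCompact (isCompact_closedBall _ _)).norm
  have hb : ∀ n, ‖∫ t, K n (y - t) * (f t - f y)‖
      ≤ (C * V) * ⨍ t in closedBall y (eps n), ‖f t - f y‖ := by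
    intro n
    have hs : ∫ t, K n (y - t) * (f t - f y)
        = ∫ t in closedBall y (eps n), K n (y - t) * (f t - f y) := by
      rw [setIntegral_eq_integral_of_forall_compl_eq_zero]
      intro t ht
      rw [h0 n (y - t), zero_mul]
      rw [mem_closedBall, not_le, dist_comm, dist_eq_norm] at ht
      exact ht
    rw [hs, setAverage_eq, hVn]
    refine (norm_integral_le_integral_norm _).trans ?_
    have e : C * V * ((eps n ^ 3 * V)⁻¹ • ∫ t in closedBall y (eps n), ‖f t - f y‖)
        = ∫ t in closedBall y (eps n), (C * (eps n)⁻¹ ^ 3) * ‖f t - f y‖ := by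
      rw [integral_const_mul, smul_eq_mul]
      have := eps_pos n
      field_simp
    rw [e]
    refine integral_mono_of_nonneg (Eventually.of_forall fun t => norm_nonneg _)
      ((hintg n).const_mul _) (Eventually.of_forall fun t => ?_)
    simp only [norm_mul]
    exact mul_le_mul_of_nonneg_right (hC n _) (norm_nonneg _)
  refine squeeze_zero_norm hb ?_
  simpa using h1.const_mul (C * V)

/-- Convolution of `f` with kernel `κ`. -/
def cnv (f κ : E3 → ℝ) (y : E3) : ℝ := ∫ t, f t * κ (y - t)

lemma cnv_eq (f κ : E3 → ℝ) :
    cnv f κ = MeasureTheory.convolution f κ (ContinuousLinearMap.mul ℝ ℝ) volume := by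
  ext y; rfl

lemma cnv_integrable {f κ : E3 → ℝ} (hf : LocallyIntegrable f volume)
    (hκ : Continuous κ) (hc : HasCompactSupport κ) (y : E3) :
    Integrable (fun t => f t * κ (y - t)) := by
  have := hc.convolutionExists_right (ContinuousLinearMap.mul ℝ ℝ) hf hκ y
  exact this

lemma cnv_smooth {f κ : E3 → ℝ} (hf : LocallyIntegrable f volume)
    (hκ : ContDiff ℝ ((⊤ : ℕ∞) : WithTop ℕ∞) κ) (hc : HasCompactSupport κ) :
    ContDiff ℝ ((⊤ : ℕ∞) : WithTop ℕ∞) (cnv f κ) := by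
  rw [cnv_eq]
  exact hc.contDiff_convolution_right _ hf hκ

lemma pd_cnv {f κ : E3 → ℝ} (hf : LocallyIntegrable f volume)
    (hκ : ContDiff ℝ ((⊤ : ℕ∞) : WithTop ℕ∞) κ) (hc : HasCompactSupport κ) (i : Fin 3) (y : E3) :
    pd (cnv f κ) i y = cnv f (pd κ i) y := by
  have h := hc.hasFDerivAt_convolution_right (ContinuousLinearMap.mul ℝ ℝ) hf (smooth_one hκ) y
  rw [pd, cnv_eq, h.fderiv]
  have hi : Integrable (fun t => (ContinuousLinearMap.mul ℝ ℝ).precompR E3 (f t) (fderiv ℝ κ (y - t))) :=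
    (hc.fderiv (𝕜 := ℝ)).convolutionExists_right _ hf ((smooth_one hκ).continuous_fderiv one_ne_zero) y
  rw [convolution_def, ContinuousLinearMap.integral_apply hi]
  rfl


lemma int_pd_zero {κ : E3 → ℝ} (hκ : ContDiff ℝ 1 κ) (hc : HasCompactSupport κ) (i : Fin 3) :
    ∫ x, pd κ i x = 0 := by
  have := ibp (a := fun _ => 1) contDiff_const hκ hc i
  have h2 : ∀ x, pd (fun _ : E3 => (1:ℝ)) i x = 0 := by intro x; simp [pd]
  simpa [h2] using this

lemma ae_moll_tendsto {r : E3 → ℝ} (hr : LocallyIntegrable r volume) :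
    ∀ᵐ y, Tendsto (fun n => cnv r (mker n) y) atTop (𝓝 (r y)) := by
  obtain ⟨C, hC0, hC1, hC2⟩ := exists_bound_ker
  filter_upwards [lebesgue_kernel hr] with y hy
  have h := hy mker C (fun n z => by
    unfold mker
    rw [abs_mul, abs_of_nonneg (pow_nonneg (inv_nonneg.2 (eps_pos n).le) _), mul_comm]
    exact mul_le_mul_of_nonneg_right (hC1 _) (pow_nonneg (inv_nonneg.2 (eps_pos n).le) _))
    (fun n z h => mker_zero h)
  have e : ∀ n, cnv r (mker n) y = (∫ t, mker n (y - t) * (r t - r y)) + r y := by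
    intro n
    have i1 := cnv_integrable hr (mker_smooth n).continuous (mker_compact n) y
    have i2 := cnv_integrable (locallyIntegrable_const (r y)) (mker_smooth n).continuous (mker_compact n) y
    have : ∫ t, mker n (y - t) * (r t - r y) = ∫ t, (r t * mker n (y - t) - r y * mker n (y - t)) := by
      congr 1; ext t; ring
    rw [this, integral_sub i1 i2, integral_const_mul,
      integral_sub_left_eq_self (fun x => mker n x) volume y, mker_integral, cnv]
    ring
  simp_rw [e]
  simpa using h.add_const (r y)

lemma ae_moll_pd_tendsto {r : E3 → ℝ} (hr : LocallyIntegrable r volume) (i : Fin 3) :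
    ∀ᵐ y, Tendsto (fun n => eps n * pd (cnv r (mker n)) i y) atTop (𝓝 0) := by
  obtain ⟨C, hC0, hC1, hC2⟩ := exists_bound_ker
  filter_upwards [lebesgue_kernel hr] with y hy
  have h := hy (fun n z => eps n * pd (mker n) i z) C (fun n z => by
    rw [pd_mker, abs_mul, abs_mul, abs_of_pos (eps_pos n),
      abs_of_nonneg (pow_nonneg (inv_nonneg.2 (eps_pos n).le) _)]
    have : eps n * ((eps n)⁻¹ ^ 4 * |pd ker0 i ((eps n)⁻¹ • z)|)
      = |pd ker0 i ((eps n)⁻¹ • z)| * (eps n)⁻¹ ^ 3 := by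
      have := eps_pos n; field_simp
    rw [this]
    exact mul_le_mul_of_nonneg_right (hC2 _ _) (pow_nonneg (inv_nonneg.2 (eps_pos n).le) _))
    (fun n z h => by rw [pd_mker_zero i h, mul_zero])
  refine h.congr fun n => ?_
  rw [pd_cnv hr (mker_smooth n) (mker_compact n)]
  have i1 := cnv_integrable hr (pd_continuous (smooth_one (mker_smooth n)) i)
    (pd_hasCompactSupport (mker_compact n) i) y
  have i2 := cnv_integrable (locallyIntegrable_const (r y)) (pd_continuous (smooth_one (mker_smooth n)) i)
    (pd_hasCompactSupport (mker_compact n) i) y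
  have : ∫ t, eps n * pd (mker n) i (y - t) * (r t - r y)
      = ∫ t, eps n * (r t * pd (mker n) i (y - t) - r y * pd (mker n) i (y - t)) := by
    congr 1; ext t; ring
  rw [this, integral_const_mul, integral_sub i1 i2, integral_const_mul,
      integral_sub_left_eq_self (fun x => pd (mker n) i x) volume y,
      int_pd_zero (smooth_one (mker_smooth n)) (mker_compact n), cnv]
  ring

lemma locInt_of_bdd {r : E3 → ℝ} {M : ℝ} (hm : Measurable r) (h : ∀ x, |r x| ≤ M) :
    LocallyIntegrable r volume := by
  refine (locallyIntegrable_const M).mono hm.aestronglyMeasurable (Eventually.of_forall fun x => ?_)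
  exact (h x).trans (le_abs_self M)

lemma moll_bounds {r : E3 → ℝ} {M : ℝ} (hm : Measurable r) (h0 : ∀ x, 0 ≤ r x) (h1 : ∀ x, r x ≤ M)
    (n : ℕ) (y : E3) : 0 ≤ cnv r (mker n) y ∧ cnv r (mker n) y ≤ M := by
  have hr := locInt_of_bdd (M := M) hm (fun x => by rw [abs_of_nonneg (h0 x)]; exact h1 x)
  refine ⟨integral_nonneg fun t => mul_nonneg (h0 t) (mker_nonneg _ _), ?_⟩
  have i1 := cnv_integrable hr (mker_smooth n).continuous (mker_compact n) y
  have i2 := cnv_integrable (locallyIntegrable_const M) (mker_smooth n).continuous (mker_compact n) y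
  calc cnv r (mker n) y ≤ ∫ t, M * mker n (y - t) :=
        integral_mono i1 i2 fun t => mul_le_mul_of_nonneg_right (h1 t) (mker_nonneg _ _)
    _ = M := by
      rw [integral_const_mul, integral_sub_left_eq_self (fun x => mker n x) volume y, mker_integral,
        mul_one]

lemma moll_pd_bound {r : E3 → ℝ} {M : ℝ} (hm : Measurable r) (h1 : ∀ x, |r x| ≤ M) (i : Fin 3) :
    ∃ C, ∀ (n : ℕ) (y : E3), |eps n * pd (cnv r (mker n)) i y| ≤ C := by
  have hr := locInt_of_bdd hm h1
  refine ⟨M * ∫ z, |pd ker0 i z|, fun n y => ?_⟩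
  rw [pd_cnv hr (mker_smooth n) (mker_compact n), cnv, ← integral_const_mul]
  have hcont := (pd_continuous (smooth_one (mker_smooth n)) i)
  have i0 : Integrable (fun t => |pd (mker n) i t|) :=
    (hcont.integrable_of_hasCompactSupport (pd_hasCompactSupport (mker_compact n) i)).abs
  have i1 : Integrable (fun t => (M * eps n) * |pd (mker n) i (y - t)|) :=
    (i0.comp_sub_left y).const_mul _
  calc |∫ t, eps n * (r t * pd (mker n) i (y - t))|
      ≤ ∫ t, |eps n * (r t * pd (mker n) i (y - t))| := abs_integral_le_integral_abs
    _ ≤ ∫ t, (M * eps n) * |pd (mker n) i (y - t)| := by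
        refine integral_mono_of_nonneg (Eventually.of_forall fun t => abs_nonneg _) i1
          (Eventually.of_forall fun t => ?_)
        simp only [abs_mul, abs_of_pos (eps_pos n)]
        rw [← mul_assoc, mul_comm M]
        gcongr
        · exact (eps_pos n).le
        · exact h1 t
    _ = M * ∫ z, |pd ker0 i z| := by
        rw [integral_const_mul, integral_sub_left_eq_self (fun x => |pd (mker n) i x|) volume y]
        simp_rw [pd_mker, abs_mul]
        rw [integral_const_mul, Measure.integral_comp_smul (μ := volume) (fun z => |pd ker0 i z|)]
        have := eps_pos n
        simp
        rw [abs_of_pos this]; field_simp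

section
variable {α : Type*} [MeasurableSpace α] {ν : Measure α}
lemma lint_sq_le [IsProbabilityMeasure ν] {h : α → ENNReal} (hh : AEMeasurable h ν) :
    (∫⁻ x, h x ∂ν) ^ 2 ≤ ∫⁻ x, h x ^ 2 ∂ν := by
  have := ENNReal.lintegral_mul_le_Lp_mul_Lq ν Real.HolderConjugate.two_two hh
    (aemeasurable_const (b := (1 : ENNReal)))
  simp at this
  calc (∫⁻ x, h x ∂ν) ^ 2 ≤ ((∫⁻ x, h x ^ 2 ∂ν) ^ (2:ℝ)⁻¹) ^ 2 := by gcongr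
    _ = _ := by
      rw [← ENNReal.rpow_natCast, ← ENNReal.rpow_mul]; simp
end

/-- difference quotient bound for smooth functions -/
lemma diffquot_smooth {w : E3 → ℝ} (hw : ContDiff ℝ 1 w) (z : E3) :
    ∫⁻ y, ‖w (y - z) - w y‖ₑ ^ 2 ≤ ‖z‖ₑ ^ 2 * ∫⁻ y, ‖fderiv ℝ w y‖ₑ ^ 2 := by
  have hcont := hw.continuous_fderiv one_ne_zero
  have key : ∀ y, ‖w (y - z) - w y‖ₑ ^ 2
      ≤ ∫⁻ s in Ioc (0:ℝ) 1, ‖z‖ₑ ^ 2 * ‖fderiv ℝ w (y - s • z)‖ₑ ^ 2 := by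
    intro y
    have hd : ∀ s : ℝ, HasDerivAt (fun s : ℝ => w (y - s • z)) (fderiv ℝ w (y - s • z) (-z)) s := by
      intro s
      have h1 : HasDerivAt (fun s : ℝ => y - s • z) (-z) s := by
        simpa using ((hasDerivAt_id s).smul_const z).const_sub y
      exact ((hw.differentiable one_ne_zero) (y - s • z)).hasFDerivAt.comp_hasDerivAt s h1
    have hc2 : Continuous fun s : ℝ => fderiv ℝ w (y - s • z) (-z) := by
      refine Continuous.clm_apply (hcont.comp (by fun_prop)) continuous_const
    have hf := intervalIntegral.integral_eq_sub_of_hasDerivAt (a := 0) (b := 1)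
      (fun s _ => hd s) (hc2.intervalIntegrable _ _)
    simp only [one_smul, zero_smul, sub_zero] at hf
    rw [← hf, intervalIntegral.integral_of_le zero_le_one]
    have : IsProbabilityMeasure (volume.restrict (Ioc (0:ℝ) 1)) := ⟨by simp⟩
    calc _ ≤ (∫⁻ s in Ioc (0:ℝ) 1, ‖fderiv ℝ w (y - s • z) (-z)‖ₑ) ^ 2 := by
          gcongr; exact enorm_integral_le_lintegral_enorm _
      _ ≤ ∫⁻ s in Ioc (0:ℝ) 1, ‖fderiv ℝ w (y - s • z) (-z)‖ₑ ^ 2 :=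
          lint_sq_le hc2.enorm.aemeasurable
      _ ≤ _ := by
          refine lintegral_mono fun s => ?_
          rw [← mul_pow]
          gcongr
          rw [mul_comm]
          simpa using (fderiv ℝ w (y - s • z)).le_opENorm (-z)
  calc _ ≤ ∫⁻ y, ∫⁻ s in Ioc (0:ℝ) 1, ‖z‖ₑ ^ 2 * ‖fderiv ℝ w (y - s • z)‖ₑ ^ 2 := lintegral_mono key
    _ = ∫⁻ s in Ioc (0:ℝ) 1, ∫⁻ y, ‖z‖ₑ ^ 2 * ‖fderiv ℝ w (y - s • z)‖ₑ ^ 2 := by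
        refine lintegral_lintegral_swap (Measurable.aemeasurable ?_)
        have : Continuous fun p : E3 × ℝ => fderiv ℝ w (p.1 - p.2 • z) := hcont.comp (by fun_prop)
        exact (measurable_const.mul (this.enorm.measurable.pow_const 2))
    _ = ∫⁻ s in Ioc (0:ℝ) 1, ‖z‖ₑ ^ 2 * ∫⁻ y, ‖fderiv ℝ w y‖ₑ ^ 2 := by
        refine lintegral_congr fun s => ?_
        rw [lintegral_const_mul' _ _ (by simp), lintegral_sub_right_eq_self (fun y => ‖fderiv ℝ w y‖ₑ ^ 2)]
    _ = _ := by simp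

lemma diffquot {w : E3 → ℝ} {wn : ℕ → E3 → ℝ} (hwn : ∀ n, ContDiff ℝ 1 (wn n))
    (hlim : ∀ᵐ y, Tendsto (fun n => wn n y) atTop (𝓝 (w y))) {A : ENNReal}
    (hA : ∀ n, ∫⁻ y, ‖fderiv ℝ (wn n) y‖ₑ ^ 2 ≤ A) (z : E3) :
    ∫⁻ y, ‖w (y - z) - w y‖ₑ ^ 2 ≤ ‖z‖ₑ ^ 2 * A := by
  have hsh : ∀ᵐ y, Tendsto (fun n => wn n (y - z)) atTop (𝓝 (w (y - z))) :=
    (measurePreserving_sub_right volume z).quasiMeasurePreserving.ae hlim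
  calc ∫⁻ y, ‖w (y - z) - w y‖ₑ ^ 2
      = ∫⁻ y, liminf (fun n => ‖wn n (y - z) - wn n y‖ₑ ^ 2) atTop := by
        refine lintegral_congr_ae ?_
        filter_upwards [hlim, hsh] with y h1 h2
        have := ((ENNReal.continuous_pow 2).tendsto _).comp ((continuous_enorm.tendsto _).comp (h2.sub h1))
        exact this.liminf_eq.symm
    _ ≤ liminf (fun n => ∫⁻ y, ‖wn n (y - z) - wn n y‖ₑ ^ 2) atTop := by
        refine lintegral_liminf_le fun n => ?_
        have := (hwn n).continuous
        have h2 : Continuous fun y => wn n (y - z) - wn n y := by fun_prop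
        exact h2.enorm.measurable.pow_const 2
    _ ≤ _ := by
        refine liminf_le_of_le (by isBoundedDefault) fun b hb => ?_
        obtain ⟨n, hn⟩ := hb.exists
        refine hn.trans ((diffquot_smooth (hwn n) z).trans ?_)
        gcongr
        exact hA n

/-- The commutator estimate. -/
lemma commutator_est {r w : E3 → ℝ} {M : ℝ} (hrm : Measurable r) (hM : ∀ x, |r x| ≤ M)
    (hwm : Measurable w) (hwl : LocallyIntegrable w volume)
    {A : ENNReal} (hA : ∀ z, ∫⁻ y, ‖w (y - z) - w y‖ₑ ^ 2 ≤ ‖z‖ₑ ^ 2 * A) (n : ℕ) :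
    ∫⁻ y, ‖cnv (fun t => r t * w t) (mker n) y - cnv r (mker n) y * w y‖ₑ ^ 2
      ≤ ENNReal.ofReal M ^ 2 * (ENNReal.ofReal (eps n) ^ 2 * A) := by
  have hr := locInt_of_bdd hrm hM
  have hrw : LocallyIntegrable (fun t => r t * w t) volume := by
    refine (hwl.smul M).mono (hrm.mul hwm).aestronglyMeasurable (Eventually.of_forall fun x => ?_)
    simp only [norm_mul, Pi.smul_apply, smul_eq_mul]
    exact mul_le_mul_of_nonneg_right ((hM x).trans (le_abs_self M)) (norm_nonneg _)
  set κ : E3 → ENNReal := fun z => ENNReal.ofReal (mker n z) with hκ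
  have hκm : Measurable κ := (mker_smooth n).continuous.measurable.ennreal_ofReal
  have hκ1 : ∫⁻ z, κ z = 1 := by
    rw [← ofReal_integral_eq_lintegral_ofReal ((mker_smooth n).continuous.integrable_of_hasCompactSupport (mker_compact n)) (Eventually.of_forall (mker_nonneg n)), mker_integral, ENNReal.ofReal_one]
  have : IsProbabilityMeasure (volume.withDensity κ) := ⟨by simp [hκ1]⟩
  have key : ∀ y, ‖cnv (fun t => r t * w t) (mker n) y - cnv r (mker n) y * w y‖ₑ ^ 2
      ≤ ENNReal.ofReal M ^ 2 * ∫⁻ z, κ z * ‖w (y - z) - w y‖ₑ ^ 2 := by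
    intro y
    have i1 := cnv_integrable hrw (mker_smooth n).continuous (mker_compact n) y
    have i2 := cnv_integrable hr (mker_smooth n).continuous (mker_compact n) y
    have e : cnv (fun t => r t * w t) (mker n) y - cnv r (mker n) y * w y
        = ∫ z, r (y - z) * mker n z * (w (y - z) - w y) := by
      rw [cnv, cnv, ← integral_mul_const, ← integral_sub i1 (i2.mul_const _),
        ← integral_sub_left_eq_self _ volume y]
      congr 1; ext t; simp; ring
    rw [e]
    calc _ ≤ (∫⁻ z, ENNReal.ofReal M * (κ z * ‖w (y - z) - w y‖ₑ)) ^ 2 := by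
          gcongr
          refine (enorm_integral_le_lintegral_enorm _).trans (lintegral_mono fun z => ?_)
          rw [enorm_mul, enorm_mul, mul_assoc]
          gcongr
          · rw [Real.enorm_eq_ofReal_abs]; exact ENNReal.ofReal_le_ofReal (hM _)
          · rw [Real.enorm_of_nonneg (mker_nonneg _ _)]
      _ = ENNReal.ofReal M ^ 2 * (∫⁻ z, ‖w (y - z) - w y‖ₑ ∂(volume.withDensity κ)) ^ 2 := by
          have hm : Measurable fun z => ‖w (y - z) - w y‖ₑ := by fun_prop
          rw [lintegral_const_mul' _ _ (by simp), mul_pow,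
            lintegral_withDensity_eq_lintegral_mul _ hκm hm]
          rfl
      _ ≤ ENNReal.ofReal M ^ 2 * (∫⁻ z, ‖w (y - z) - w y‖ₑ ^ 2 ∂(volume.withDensity κ)) := by
          gcongr
          refine lint_sq_le (Measurable.aemeasurable ?_)
          fun_prop
      _ = _ := by
          have hm : Measurable fun z => ‖w (y - z) - w y‖ₑ ^ 2 := by fun_prop
          rw [lintegral_withDensity_eq_lintegral_mul _ hκm hm]
          rfl
  calc _ ≤ ∫⁻ y, ENNReal.ofReal M ^ 2 * ∫⁻ z, κ z * ‖w (y - z) - w y‖ₑ ^ 2 := lintegral_mono key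
    _ = ENNReal.ofReal M ^ 2 * ∫⁻ z, ∫⁻ y, κ z * ‖w (y - z) - w y‖ₑ ^ 2 := by
        rw [lintegral_const_mul' _ _ (by simp), lintegral_lintegral_swap]
        refine Measurable.aemeasurable ?_
        have : Measurable fun p : E3 × E3 => ‖w (p.1 - p.2) - w p.1‖ₑ ^ 2 := by fun_prop
        exact (hκm.comp measurable_snd).mul this
    _ ≤ ENNReal.ofReal M ^ 2 * ∫⁻ z, κ z * (ENNReal.ofReal (eps n) ^ 2 * A) := by
        gcongr with z
        rw [lintegral_const_mul' _ _ (by simp [hκ])]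
        rcases le_or_gt ‖z‖ (eps n) with h | h
        · gcongr
          refine (hA z).trans ?_
          gcongr
          rw [← ofReal_norm]
          exact ENNReal.ofReal_le_ofReal h
        · simp [hκ, mker_zero h]
    _ = _ := by
        rw [lintegral_mul_const _ hκm, hκ1, one_mul]


/-- Velocity data on the whole space together with its smooth approximation. -/
structure Vel (v : Fin 3 → E3 → ℝ) (dv : Fin 3 → Fin 3 → E3 → ℝ)
    (vn : ℕ → Fin 3 → E3 → ℝ) : Prop where
  meas : ∀ i, Measurable (v i)
  L6 : ∀ i, MemLp (v i) 6 volume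
  dL2 : ∀ i j, MemLp (dv i j) 2 volume
  smooth : ∀ n i, ContDiff ℝ ((⊤ : ℕ∞) : WithTop ℕ∞) (vn n i)
  cpt : ∀ n i, HasCompactSupport (vn n i)
  lim6 : ∀ i, Tendsto (fun n => eLpNorm (fun x => vn n i x - v i x) 6 volume) atTop (𝓝 0)
  lim2 : ∀ i j, Tendsto (fun n => eLpNorm (fun x => pd (vn n i) j x - dv i j x) 2 volume)
    atTop (𝓝 0)
  ae : ∀ i, ∀ᵐ x, Tendsto (fun n => vn n i x) atTop (𝓝 (v i x))

lemma holderTriple_ofReal {a b c : ℝ} (ha : 0 < a) (hb : 0 < b) (hc : 0 < c)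
    (h : a⁻¹ + b⁻¹ = c⁻¹) :
    ENNReal.HolderTriple (ENNReal.ofReal a) (ENNReal.ofReal b) (ENNReal.ofReal c) := by
  constructor
  rw [← ENNReal.ofReal_inv_of_pos ha, ← ENNReal.ofReal_inv_of_pos hb,
    ← ENNReal.ofReal_inv_of_pos hc, ← ENNReal.ofReal_add (by positivity) (by positivity), h]

lemma holder65 : ENNReal.HolderConjugate (ENNReal.ofReal (6 / 5)) 6 := by
  have := holderTriple_ofReal (a := 6/5) (b := 6) (c := 1) (by norm_num) (by norm_num) (by norm_num)
    (by norm_num)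
  simpa using this

lemma memLp_cc {f : E3 → ℝ} (hf : Continuous f) (hc : HasCompactSupport f) (p : ENNReal) :
    MemLp f p volume := hf.memLp_of_hasCompactSupport hc

namespace Vel
variable {v : Fin 3 → E3 → ℝ} {dv : Fin 3 → Fin 3 → E3 → ℝ} {vn : ℕ → Fin 3 → E3 → ℝ}

lemma memLp_vn (h : Vel v dv vn) (n i) (p : ENNReal) : MemLp (vn n i) p volume :=
  memLp_cc (h.smooth n i).continuous (h.cpt n i) p

lemma memLp_pd (h : Vel v dv vn) (n i j) (p : ENNReal) : MemLp (pd (vn n i) j) p volume :=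
  memLp_cc (pd_continuous (smooth_one (h.smooth n i)) j) (pd_hasCompactSupport (h.cpt n i) j) p

lemma locInt (h : Vel v dv vn) (i) : LocallyIntegrable (v i) volume :=
  (h.L6 i).locallyIntegrable (by norm_num)

lemma weak_div (h : Vel v dv vn) {ψ : E3 → ℝ} (hψ : ContDiff ℝ 1 ψ) (hc : HasCompactSupport ψ)
    (i j : Fin 3) : ∫ x, v i x * pd ψ j x = - ∫ x, dv i j x * ψ x := by
  have := holder65
  have h1 := conv_Lp (p := ENNReal.ofReal (6/5)) (q := 6)
    (memLp_cc (pd_continuous hψ j) (pd_hasCompactSupport hc j) _) (h.L6 i)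
    (fun n => h.memLp_vn n i 6) (h.lim6 i)
  have h2 := conv_Lp (p := 2) (q := 2) (memLp_cc hψ.continuous hc _) (h.dL2 i j)
    (fun n => h.memLp_pd n i j 2) (h.lim2 i j)
  have e : ∀ n, ∫ x, pd ψ j x * vn n i x = - ∫ x, ψ x * pd (vn n i) j x := by
    intro n
    have := ibp (smooth_one (h.smooth n i)) hψ hc j
    simpa [mul_comm] using this
  simp_rw [e] at h1
  have := tendsto_nhds_unique h1 h2.neg
  simpa [mul_comm] using this
end Vel

lemma fderiv_norm_le {w : E3 → ℝ} (y : E3) : ‖fderiv ℝ w y‖ ≤ ∑ j, |pd w j y| := by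
  refine ContinuousLinearMap.opNorm_le_bound _ (by positivity) fun x => ?_
  have hx : x = ∑ j, x j • (EuclideanSpace.single j (1:ℝ) : E3) := by
    have := (EuclideanSpace.basisFun (Fin 3) ℝ).sum_repr x
    simpa using this.symm
  have : fderiv ℝ w y x = ∑ j, x j * pd w j y := by
    conv_lhs => rw [hx]
    simp [pd]
  rw [this, Finset.sum_mul]
  refine (norm_sum_le _ _).trans (Finset.sum_le_sum fun j _ => ?_)
  rw [norm_mul, mul_comm, Real.norm_eq_abs (pd w j y)]
  exact mul_le_mul_of_nonneg_left (PiLp.norm_apply_le x j) (abs_nonneg _)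

section
variable {α : Type*} [MeasurableSpace α] {ν : Measure α}
lemma eLpNorm_two_sq {F : Type*} [NormedAddCommGroup F] (f : α → F) :
    eLpNorm f 2 ν ^ 2 = ∫⁻ x, ‖f x‖ₑ ^ 2 ∂ν := by
  rw [eLpNorm_eq_lintegral_rpow_enorm_toReal (by norm_num) (by norm_num)]
  rw [← ENNReal.rpow_natCast, ← ENNReal.rpow_mul]
  simp

lemma tendsto_eLpNorm_two_zero {f : ℕ → α → ℝ} {Φ : α → ℝ} (hf : ∀ n, AEStronglyMeasurable (f n) ν)
    (hΦ : MemLp Φ 2 ν) (hb : ∀ n, ∀ᵐ x ∂ν, |f n x| ≤ Φ x)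
    (hl : ∀ᵐ x ∂ν, Tendsto (fun n => f n x) atTop (𝓝 0)) :
    Tendsto (fun n => eLpNorm (f n) 2 ν) atTop (𝓝 0) := by
  have h : Tendsto (fun n => ∫⁻ x, ‖f n x‖ₑ ^ 2 ∂ν) atTop (𝓝 (∫⁻ x, 0 ∂ν)) := by
    refine tendsto_lintegral_of_dominated_convergence' (fun x => ‖Φ x‖ₑ ^ 2)
      (fun n => ((hf n).enorm.pow_const 2)) ?_ ?_ ?_
    · intro n
      filter_upwards [hb n] with x hx
      gcongr
      rw [enorm_le_iff_norm_le]
      exact hx.trans (le_abs_self _)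
    · rw [← eLpNorm_two_sq]
      exact (ENNReal.pow_lt_top hΦ.2).ne
    · filter_upwards [hl] with x hx
      have := ((ENNReal.continuous_pow 2).tendsto _).comp ((continuous_enorm.tendsto _).comp hx)
      simpa [Function.comp_def] using this
  simp only [lintegral_zero] at h
  have h2 := ((ENNReal.continuous_rpow_const (y := (1/2:ℝ))).tendsto _).comp h
  simp only [one_div] at h2
  rw [ENNReal.zero_rpow_of_pos (by norm_num)] at h2
  refine h2.congr fun n => ?_
  simp only [Function.comp]
  rw [← eLpNorm_two_sq, ← ENNReal.rpow_natCast, ← ENNReal.rpow_mul]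
  simp
end

lemma Vel.pd_bound {v : Fin 3 → E3 → ℝ} {dv : Fin 3 → Fin 3 → E3 → ℝ} {vn : ℕ → Fin 3 → E3 → ℝ}
    (h : Vel v dv vn) (i j : Fin 3) :
    ∃ B : ENNReal, B ≠ ⊤ ∧ ∀ n, eLpNorm (pd (vn n i) j) 2 volume ≤ B := by
  have hm : ∀ n, MemLp (fun x => pd (vn n i) j x - dv i j x) 2 volume :=
    fun n => (h.memLp_pd n i j 2).sub (h.dL2 i j)
  have ht := (ENNReal.tendsto_toReal ENNReal.zero_ne_top).comp (h.lim2 i j)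
  obtain ⟨B, hB⟩ := ht.bddAbove_range
  have hB' : ∀ n, (eLpNorm (fun x => pd (vn n i) j x - dv i j x) 2 volume).toReal ≤ B :=
    fun n => hB (Set.mem_range_self n)
  refine ⟨ENNReal.ofReal B + eLpNorm (dv i j) 2 volume, ENNReal.add_ne_top.2
    ⟨ENNReal.ofReal_ne_top, (h.dL2 i j).2.ne⟩, fun n => ?_⟩
  have e : pd (vn n i) j = (fun x => pd (vn n i) j x - dv i j x) + dv i j := by
    ext x; simp
  rw [e]
  refine (eLpNorm_add_le (hm n).1 (h.dL2 i j).1 (by norm_num)).trans ?_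
  refine add_le_add ?_ le_rfl
  rw [← ENNReal.ofReal_toReal (hm n).2.ne]
  exact ENNReal.ofReal_le_ofReal (hB' n)

lemma eLpNorm_fderiv_le {w : E3 → ℝ} (hw : ContDiff ℝ 1 w) :
    eLpNorm (fderiv ℝ w) 2 volume ≤ ∑ j, eLpNorm (pd w j) 2 volume := by
  calc eLpNorm (fderiv ℝ w) 2 volume
      ≤ eLpNorm (∑ j, fun y => |pd w j y|) 2 volume := by
        refine eLpNorm_mono_real fun y => ?_
        simpa using fderiv_norm_le (w := w) y
    _ ≤ ∑ j, eLpNorm (fun y => |pd w j y|) 2 volume := by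
        refine eLpNorm_sum_le (fun j _ => ?_) (by norm_num)
        exact (pd_continuous hw j).abs.aestronglyMeasurable
    _ ≤ ∑ j, eLpNorm (pd w j) 2 volume := by
        refine Finset.sum_le_sum fun j _ => ?_
        exact (eLpNorm_norm (pd w j)).le

lemma Vel.grad_bound {v : Fin 3 → E3 → ℝ} {dv : Fin 3 → Fin 3 → E3 → ℝ} {vn : ℕ → Fin 3 → E3 → ℝ}
    (h : Vel v dv vn) (i : Fin 3) :
    ∃ A : ENNReal, A ≠ ⊤ ∧ ∀ n, ∫⁻ y, ‖fderiv ℝ (vn n i) y‖ₑ ^ 2 ≤ A := by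
  choose B hB hB2 using h.pd_bound i
  refine ⟨(∑ j, B j) ^ 2, ENNReal.pow_ne_top (ENNReal.sum_ne_top.2 fun j _ => hB j), fun n => ?_⟩
  rw [← eLpNorm_two_sq]
  refine pow_le_pow_left' ?_ 2
  exact (eLpNorm_fderiv_le (smooth_one (h.smooth n i))).trans
    (Finset.sum_le_sum fun j _ => hB2 j n)


section Renorm
variable {v : Fin 3 → E3 → ℝ} {dv : Fin 3 → Fin 3 → E3 → ℝ} {vn : ℕ → Fin 3 → E3 → ℝ}
  {r : E3 → ℝ} {M : ℝ}

lemma abs_le_of_bds (hr0 : ∀ x, 0 ≤ r x) (hrM : ∀ x, r x ≤ M) (x : E3) : |r x| ≤ M := by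
  rw [abs_of_nonneg (hr0 x)]; exact hrM x

lemma rv_L6 (hV : Vel v dv vn) (hrm : Measurable r) (hr : ∀ x, |r x| ≤ M) (i : Fin 3) :
    MemLp (fun x => r x * v i x) 6 volume := by
  have := memLp_bdd_mul (hV.L6 i) hrm.aestronglyMeasurable (Eventually.of_forall hr)
  simpa [mul_comm] using this

lemma rv_locInt (hV : Vel v dv vn) (hrm : Measurable r) (hr : ∀ x, |r x| ≤ M) (i : Fin 3) :
    LocallyIntegrable (fun x => r x * v i x) volume :=
  (rv_L6 hV hrm hr i).locallyIntegrable (by norm_num)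

lemma pd_reflect {κ : E3 → ℝ} (hκ : ContDiff ℝ 1 κ) (y x : E3) (i : Fin 3) :
    pd (fun x => κ (y - x)) i x = - pd κ i (y - x) := by
  unfold pd
  have h1 : HasFDerivAt κ (fderiv ℝ κ (y - x)) (y - x) :=
    (hκ.differentiable (by norm_num) _).hasFDerivAt
  have h2 : HasFDerivAt (fun x : E3 => y - x) (-(ContinuousLinearMap.id ℝ E3)) x :=
    (hasFDerivAt_id x).const_sub y
  have := (h1.comp x h2).fderiv
  change fderiv ℝ (κ ∘ fun x => y - x) x _ = _
  rw [this]; simp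

lemma mass_moll (hV : Vel v dv vn) (hrm : Measurable r) (hr : ∀ x, |r x| ≤ M)
    (mass : ∀ φ : E3 → ℝ, ContDiff ℝ ((⊤ : ℕ∞) : WithTop ℕ∞) φ → HasCompactSupport φ →
      ∫ x, r x * (∑ i, v i x * pd φ i x) = 0) (n : ℕ) (y : E3) :
    ∑ i, pd (cnv (fun t => r t * v i t) (mker n)) i y = 0 := by
  have h1 := mass (fun x => mker n (y - x)) ((mker_smooth n).comp (by fun_prop))
    ((mker_compact n).comp_homeomorph (Homeomorph.subLeft y))
  have h2 : ∀ i, pd (cnv (fun t => r t * v i t) (mker n)) i y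
      = ∫ t, r t * v i t * pd (mker n) i (y - t) := fun i => by
    rw [pd_cnv (rv_locInt hV hrm hr i) (mker_smooth n) (mker_compact n)]; rfl
  simp_rw [h2]
  rw [← integral_finsetSum]
  · rw [← neg_eq_zero, ← integral_neg, ← h1]
    congr 1; ext x
    simp_rw [pd_reflect (smooth_one (mker_smooth n)), Finset.mul_sum, ← Finset.sum_neg_distrib]
    refine Finset.sum_congr rfl fun i _ => by ring
  · intro i _
    exact cnv_integrable (rv_locInt hV hrm hr i) (pd_continuous (smooth_one (mker_smooth n)) i)
      (pd_hasCompactSupport (mker_compact n) i) y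

lemma contDiff_one_of_deriv {g g' : ℝ → ℝ} (hg : ∀ s, HasDerivAt g (g' s) s)
    (hg' : Continuous g') : ContDiff ℝ 1 g := by
  rw [contDiff_one_iff_deriv]
  refine ⟨fun s => (hg s).differentiableAt, ?_⟩
  have : deriv g = g' := funext fun s => (hg s).deriv
  rwa [this]

lemma bdd_on_Icc {g : ℝ → ℝ} (hg : Continuous g) (M : ℝ) :
    ∃ C, 0 ≤ C ∧ ∀ s, 0 ≤ s → s ≤ M → |g s| ≤ C := by
  obtain ⟨C, hC⟩ := (isCompact_Icc (a := (0:ℝ)) (b := M)).exists_bound_of_continuousOn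
    hg.continuousOn
  exact ⟨max C 0, le_max_right _ _, fun s h0 h1 => (hC s ⟨h0, h1⟩).trans (le_max_left _ _)⟩

lemma renorm_err (hV : Vel v dv vn) (hrm : Measurable r) (hr0 : ∀ x, 0 ≤ r x)
    (hrM : ∀ x, r x ≤ M) {g g' : ℝ → ℝ} (hg : ∀ s, HasDerivAt g (g' s) s) (hg' : Continuous g')
    {ζ : E3 → ℝ} (hζ : ContDiff ℝ 1 ζ) (hζc : HasCompactSupport ζ) (i : Fin 3) :
    Tendsto (fun n => ∫ y, (cnv (fun t => r t * v i t) (mker n) y - cnv r (mker n) y * v i y)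
      * pd (fun y => ζ y * g (cnv r (mker n) y)) i y) atTop (𝓝 0) := by
  have hr := abs_le_of_bds hr0 hrM
  have hrl := locInt_of_bdd hrm hr
  have hgc : ContDiff ℝ 1 g := contDiff_one_of_deriv hg hg'
  have hR : ∀ n, ContDiff ℝ 1 (cnv r (mker n)) := fun n =>
    smooth_one (cnv_smooth hrl (mker_smooth n) (mker_compact n))
  obtain ⟨A, hAt, hA⟩ := hV.grad_bound i
  have hdq := diffquot (fun n => smooth_one (hV.smooth n i)) (hV.ae i) hA
  have hcom := commutator_est hrm hr (hV.meas i) (hV.locInt i) hdq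
  set D : ℕ → E3 → ℝ := fun n y =>
    cnv (fun t => r t * v i t) (mker n) y - cnv r (mker n) y * v i y with hD
  set ψ : ℕ → E3 → ℝ := fun n y => ζ y * g (cnv r (mker n) y) with hψ
  have hψs : ∀ n, ContDiff ℝ 1 (ψ n) := fun n => hζ.mul (hgc.comp (hR n))
  have hψc : ∀ n, HasCompactSupport (ψ n) := fun n => hζc.mul_right
  -- scaled commutator
  have hDm : ∀ n, AEStronglyMeasurable (D n) volume := fun n => by
    refine AEStronglyMeasurable.sub ?_ ?_
    · exact (cnv_smooth (rv_locInt hV hrm hr i) (mker_smooth n)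
        (mker_compact n)).continuous.aestronglyMeasurable
    · exact (hR n).continuous.aestronglyMeasurable.mul (hV.meas i).aestronglyMeasurable
  set K : ENNReal := ENNReal.ofReal M ^ 2 * A with hK
  have hKt : K ≠ ⊤ := ENNReal.mul_ne_top (by simp) hAt
  have hF2 : ∀ n, eLpNorm (fun y => (eps n)⁻¹ * D n y) 2 volume ^ 2 ≤ K := fun n => by
    rw [eLpNorm_two_sq]
    simp_rw [enorm_mul, mul_pow]
    rw [lintegral_const_mul' _ _ (by simp)]
    refine (mul_le_mul_right (hcom n) _).trans (le_of_eq ?_)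
    have e1 : ‖(eps n)⁻¹‖ₑ = (ENNReal.ofReal (eps n))⁻¹ := by
      rw [Real.enorm_of_nonneg (inv_nonneg.2 (eps_pos n).le), ENNReal.ofReal_inv_of_pos (eps_pos n)]
    have e2 : ENNReal.ofReal (eps n) ≠ 0 := by simpa using eps_pos n
    have e3 : (ENNReal.ofReal (eps n))⁻¹ ^ 2 * ENNReal.ofReal (eps n) ^ 2 = 1 := by
      rw [← mul_pow, ENNReal.inv_mul_cancel e2 (by simp), one_pow]
    rw [e1, hK]
    calc _ = ((ENNReal.ofReal (eps n))⁻¹ ^ 2 * ENNReal.ofReal (eps n) ^ 2)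
          * (ENNReal.ofReal M ^ 2 * A) := by ring
      _ = _ := by rw [e3, one_mul]
  have hFt : ∀ n, eLpNorm (fun y => (eps n)⁻¹ * D n y) 2 volume ≠ ⊤ := fun n h => by
    have := hF2 n
    rw [h] at this; simp at this; exact hKt this
  have hFL : ∀ n, MemLp (fun y => (eps n)⁻¹ * D n y) 2 volume := fun n =>
    ⟨(hDm n).const_mul _, lt_top_iff_ne_top.2 (hFt n)⟩
  have hFb : ∀ n, (eLpNorm (fun y => (eps n)⁻¹ * D n y) 2 volume).toReal ≤ Real.sqrt K.toReal :=
    fun n => by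
      refine Real.le_sqrt_of_sq_le ?_
      rw [← ENNReal.toReal_pow]
      exact ENNReal.toReal_mono hKt (hF2 n)
  -- scaled gradient
  have hpdψ : ∀ n y, pd (ψ n) i y = ζ y * (g' (cnv r (mker n) y) * pd (cnv r (mker n)) i y)
      + g (cnv r (mker n) y) * pd ζ i y := fun n y => by
    have d1 := (hζ.differentiable (by norm_num)) y
    have d2 := ((hR n).differentiable (by norm_num)) y
    have d3 : DifferentiableAt ℝ (fun y => g (cnv r (mker n) y)) y :=
      ((hgc.comp (hR n)).differentiable (by norm_num)) y
    rw [hψ]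
    dsimp only
    rw [pd_mul d1 d3, pd_comp d2 (hg _)]
  obtain ⟨C1, hC1, hb1⟩ := bdd_on_Icc hgc.continuous M
  obtain ⟨C2, hC2, hb2⟩ := bdd_on_Icc hg' M
  obtain ⟨C3, hb3⟩ := moll_pd_bound hrm hr i
  have hC3 : 0 ≤ C3 := (abs_nonneg _).trans (hb3 0 0)
  have hlim : Tendsto (fun n => eLpNorm (fun y => eps n * pd (ψ n) i y) 2 volume) atTop (𝓝 0) := by
    refine tendsto_eLpNorm_two_zero (Φ := fun y => C2 * C3 * |ζ y| + C1 * |pd ζ i y|) ?_ ?_ ?_ ?_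
    · intro n
      exact ((pd_continuous (hψs n) i).const_mul _ |>.aestronglyMeasurable)
    · refine MemLp.add ?_ ?_
      · exact ((memLp_cc hζ.continuous hζc 2).abs).const_mul (C2 * C3)
      · exact ((memLp_cc (pd_continuous hζ i) (pd_hasCompactSupport hζc i) 2).abs).const_mul C1
    · intro n
      refine Eventually.of_forall fun y => ?_
      rw [hpdψ]
      have hb := moll_bounds hrm hr0 hrM n y
      have e : eps n * (ζ y * (g' (cnv r (mker n) y) * pd (cnv r (mker n)) i y)
        + g (cnv r (mker n) y) * pd ζ i y) =
        g' (cnv r (mker n) y) * (eps n * pd (cnv r (mker n)) i y) * ζ y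
        + (eps n * g (cnv r (mker n) y)) * pd ζ i y := by ring
      rw [e]
      refine (abs_add_le _ _).trans (add_le_add ?_ ?_)
      · rw [abs_mul, abs_mul]
        have := hb2 _ hb.1 hb.2
        have := hb3 n y
        gcongr
      · rw [abs_mul, abs_mul]
        have h1 := hb1 _ hb.1 hb.2
        have h2 : |eps n| ≤ 1 := by rw [abs_of_pos (eps_pos n)]; exact eps_le_one n
        gcongr
        calc |eps n| * |g (cnv r (mker n) y)| ≤ 1 * C1 := by gcongr
          _ = C1 := one_mul _
    · filter_upwards [ae_moll_tendsto hrl, ae_moll_pd_tendsto hrl i] with y h1 h2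
      have t1 := (hg'.tendsto _).comp h1
      have t2 := (hgc.continuous.tendsto _).comp h1
      have := ((t1.mul h2).mul_const (ζ y)).add ((eps_tendsto.mul t2).mul_const (pd ζ i y))
      simp only [mul_zero, zero_mul, add_zero] at this
      refine this.congr fun n => ?_
      rw [hpdψ]; simp only [Function.comp]; ring
  have hlimR : Tendsto (fun n => Real.sqrt K.toReal *
      (eLpNorm (fun y => eps n * pd (ψ n) i y) 2 volume).toReal) atTop (𝓝 0) := by
    have := (ENNReal.tendsto_toReal (by simp)).comp hlim
    simpa using this.const_mul (Real.sqrt K.toReal)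
  refine squeeze_zero_norm (fun n => ?_) hlimR
  have e : ∫ y, D n y * pd (ψ n) i y = ∫ y, ((eps n)⁻¹ * D n y) * (eps n * pd (ψ n) i y) := by
    congr 1; ext y
    have := (eps_pos n).ne'
    field_simp
  rw [Real.norm_eq_abs]
  change |∫ y, D n y * pd (ψ n) i y| ≤ _
  rw [e]
  refine (holder_abs (hFL n) (p := 2) (q := 2) ?_).trans ?_
  · exact (memLp_cc (pd_continuous (hψs n) i) (pd_hasCompactSupport (hψc n) i) 2).const_mul _
  · exact mul_le_mul_of_nonneg_right (hFb n) ENNReal.toReal_nonneg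

lemma renorm (hV : Vel v dv vn) (hrm : Measurable r) (hr0 : ∀ x, 0 ≤ r x)
    (hrM : ∀ x, r x ≤ M)
    (mass : ∀ φ : E3 → ℝ, ContDiff ℝ ((⊤ : ℕ∞) : WithTop ℕ∞) φ → HasCompactSupport φ →
      ∫ x, r x * (∑ i, v i x * pd φ i x) = 0)
    {g g' H : ℝ → ℝ} (hg : ∀ s, HasDerivAt g (g' s) s) (hg' : Continuous g')
    (hH : ∀ s, HasDerivAt H (s * g' s) s)
    {ζ : E3 → ℝ} (hζ : ContDiff ℝ 1 ζ) (hζc : HasCompactSupport ζ) :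
    ∑ i, ∫ x, pd ζ i x * (r x * g (r x) - H (r x)) * v i x
      = ∑ i, ∫ x, ζ x * H (r x) * dv i i x := by
  have hr := abs_le_of_bds hr0 hrM
  have hrl := locInt_of_bdd hrm hr
  have hgc : ContDiff ℝ 1 g := contDiff_one_of_deriv hg hg'
  have hHc : ContDiff ℝ 1 H := contDiff_one_of_deriv hH (continuous_id.mul hg')
  have hR : ∀ n, ContDiff ℝ 1 (cnv r (mker n)) := fun n =>
    smooth_one (cnv_smooth hrl (mker_smooth n) (mker_compact n))
  have hm : ∀ n i, ContDiff ℝ 1 (cnv (fun t => r t * v i t) (mker n)) := fun n i =>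
    smooth_one (cnv_smooth (rv_locInt hV hrm hr i) (mker_smooth n) (mker_compact n))
  have h65 := holder65
  -- limits
  have L0 := fun i => renorm_err hV hrm hr0 hrM hg hg' hζ hζc i
  have hbc : Continuous fun s => s * g s - H s :=
    (continuous_id.mul hgc.continuous).sub hHc.continuous
  obtain ⟨C1, -, hb1⟩ := bdd_on_Icc hbc M
  obtain ⟨C2, -, hb2⟩ := bdd_on_Icc hHc.continuous M
  have L1 : ∀ i, Tendsto (fun n => ∫ x, pd ζ i x *
      (cnv r (mker n) x * g (cnv r (mker n) x) - H (cnv r (mker n) x)) * v i x) atTop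
      (𝓝 (∫ x, pd ζ i x * (r x * g (r x) - H (r x)) * v i x)) := fun i => by
    refine conv_bdd (p := ENNReal.ofReal (6/5)) (q := 6) (C := C1)
      (gn := fun _ => v i)
      (cn := fun n x => cnv r (mker n) x * g (cnv r (mker n) x) - H (cnv r (mker n) x))
      (c := fun x => r x * g (r x) - H (r x))
      (memLp_cc (pd_continuous hζ i) (pd_hasCompactSupport hζc i) _) (hV.L6 i)
      (fun _ => hV.L6 i) (by simp) ?_ ?_ ?_
    · intro n; exact (hbc.comp (hR n).continuous).aestronglyMeasurable
    · intro n; refine Eventually.of_forall fun y => ?_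
      have hb := moll_bounds hrm hr0 hrM n y
      exact hb1 _ hb.1 hb.2
    · filter_upwards [ae_moll_tendsto hrl] with y h1
      exact (hbc.tendsto _).comp h1
  have L2 : ∀ i, Tendsto (fun n => ∫ x, ζ x * H (cnv r (mker n) x) * dv i i x) atTop
      (𝓝 (∫ x, ζ x * H (r x) * dv i i x)) := fun i => by
    refine conv_bdd (p := 2) (q := 2) (C := C2)
      (gn := fun _ => dv i i)
      (cn := fun n x => H (cnv r (mker n) x))
      (c := fun x => H (r x))
      (memLp_cc hζ.continuous hζc _) (hV.dL2 i i)
      (fun _ => hV.dL2 i i) (by simp) ?_ ?_ ?_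
    · intro n; exact (hHc.continuous.comp (hR n).continuous).aestronglyMeasurable
    · intro n; refine Eventually.of_forall fun y => ?_
      have hb := moll_bounds hrm hr0 hrM n y
      exact hb2 _ hb.1 hb.2
    · filter_upwards [ae_moll_tendsto hrl] with y h1
      exact (hHc.continuous.tendsto _).comp h1
  -- identity at level n
  have key : ∀ n, ∑ i, ((∫ x, pd ζ i x *
      (cnv r (mker n) x * g (cnv r (mker n) x) - H (cnv r (mker n) x)) * v i x)
      - (∫ x, ζ x * H (cnv r (mker n) x) * dv i i x)
      + ∫ y, (cnv (fun t => r t * v i t) (mker n) y - cnv r (mker n) y * v i y)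
      * pd (fun y => ζ y * g (cnv r (mker n) y)) i y) = 0 := by
    intro n
    have hψ : ContDiff ℝ 1 (fun y => ζ y * g (cnv r (mker n) y)) := hζ.mul (hgc.comp (hR n))
    have hψc : HasCompactSupport (fun y => ζ y * g (cnv r (mker n) y)) := hζc.mul_right
    have hχ : ContDiff ℝ 1 (fun y => ζ y * H (cnv r (mker n) y)) := hζ.mul (hHc.comp (hR n))
    have hχc : HasCompactSupport (fun y => ζ y * H (cnv r (mker n) y)) := hζc.mul_right
    have z : ∑ i, ∫ y, cnv (fun t => r t * v i t) (mker n) y *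
        pd (fun y => ζ y * g (cnv r (mker n) y)) i y = 0 := by
      simp_rw [fun i => ibp (hm n i) hψ hψc i]
      rw [Finset.sum_neg_distrib, neg_eq_zero, ← integral_finsetSum]
      · simp_rw [← Finset.sum_mul, mass_moll hV hrm hr mass n]; simp
      · intro i _
        exact ((pd_continuous (hm n i) i).mul hψ.continuous).integrable_of_hasCompactSupport
          hψc.mul_left
    rw [← z]
    refine Finset.sum_congr rfl fun i _ => ?_
    have w := hV.weak_div hχ hχc i i
    have w' : ∫ x, ζ x * H (cnv r (mker n) x) * dv i i x =
        - ∫ x, v i x * pd (fun y => ζ y * H (cnv r (mker n) y)) i x := by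
      rw [w, neg_neg]; congr 1; ext x; ring
    have hv6 := hV.L6 i
    have hintg : ∀ {f : E3 → ℝ}, Continuous f → HasCompactSupport f →
        Integrable (fun x => f x * v i x) volume := fun hf hc =>
      integrable_mul_Lp (p := ENNReal.ofReal (6/5)) (q := 6) (memLp_cc hf hc _) hv6
    have I1 : Integrable (fun x => pd ζ i x *
      (cnv r (mker n) x * g (cnv r (mker n) x) - H (cnv r (mker n) x)) * v i x) volume :=
      hintg ((pd_continuous hζ i).mul (hbc.comp (hR n).continuous))
        (pd_hasCompactSupport hζc i).mul_right
    have I2 : Integrable (fun x => v i x * pd (fun y => ζ y * H (cnv r (mker n) y)) i x) volume := by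
      have := hintg (pd_continuous hχ i) (pd_hasCompactSupport hχc i)
      simpa [mul_comm] using this
    have I3 : Integrable (fun y => (cnv r (mker n) y * v i y)
      * pd (fun y => ζ y * g (cnv r (mker n) y)) i y) volume := by
      have := hintg ((hR n).continuous.mul (pd_continuous hψ i))
        (pd_hasCompactSupport hψc i).mul_left
      refine this.congr (Eventually.of_forall fun x => ?_)
      simp only [Pi.mul_apply]; ring
    have I4 : Integrable (fun y => cnv (fun t => r t * v i t) (mker n) y
      * pd (fun y => ζ y * g (cnv r (mker n) y)) i y) volume :=
      ((hm n i).continuous.mul (pd_continuous hψ i)).integrable_of_hasCompactSupport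
        (pd_hasCompactSupport hψc i).mul_left
    simp_rw [sub_mul _ _ (pd _ _ _)]
    rw [integral_sub I4 I3, w', sub_neg_eq_add, ← integral_add I1 I2]
    have e : ∫ x, (pd ζ i x *
      (cnv r (mker n) x * g (cnv r (mker n) x) - H (cnv r (mker n) x)) * v i x +
        v i x * pd (fun y => ζ y * H (cnv r (mker n) y)) i x) =
      ∫ y, (cnv r (mker n) y * v i y) * pd (fun y => ζ y * g (cnv r (mker n) y)) i y := by
      congr 1; ext x
      have d1 := (hζ.differentiable (by norm_num)) x
      have d2 := ((hR n).differentiable (by norm_num)) x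
      have d3 : DifferentiableAt ℝ (fun y => g (cnv r (mker n) y)) x :=
        ((hgc.comp (hR n)).differentiable (by norm_num)) x
      have d4 : DifferentiableAt ℝ (fun y => H (cnv r (mker n) y)) x :=
        ((hHc.comp (hR n)).differentiable (by norm_num)) x
      rw [pd_mul d1 d3, pd_mul d1 d4, pd_comp d2 (hg _), pd_comp d2 (hH _)]
      ring
    rw [e]; ring
  have T := tendsto_finsetSum Finset.univ fun i (_ : i ∈ Finset.univ) =>
    ((L1 i).sub (L2 i)).add (L0 i)
  simp_rw [key] at T
  have := tendsto_nhds_unique T tendsto_const_nhds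
  simp only [add_zero, Finset.sum_sub_distrib] at this
  linarith
end Renorm


/-- Truncation vanishing below `δ` and equal to one above `2δ`. -/
def trc (δ s : ℝ) : ℝ := min 1 (max 0 ((s - δ) / δ))

lemma trc_cont (δ : ℝ) : Continuous (trc δ) := by unfold trc; fun_prop
lemma trc_nonneg (δ s : ℝ) : 0 ≤ trc δ s := le_min zero_le_one (le_max_left _ _)
lemma trc_le_one (δ s : ℝ) : trc δ s ≤ 1 := min_le_left _ _
lemma trc_zero {δ s : ℝ} (hδ : 0 < δ) (h : s ≤ δ) : trc δ s = 0 := by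
  unfold trc
  have : (s - δ) / δ ≤ 0 := div_nonpos_of_nonpos_of_nonneg (by linarith) hδ.le
  rw [max_eq_left this]; simp
lemma trc_one {δ s : ℝ} (hδ : 0 < δ) (h : 2 * δ ≤ s) : trc δ s = 1 := by
  unfold trc
  have : 1 ≤ (s - δ) / δ := by rw [le_div_iff₀ hδ]; linarith
  rw [min_eq_left]; exact this.trans (le_max_right _ _)

/-- Truncated derivative of the pressure over the density. -/
def wtr (p' : ℝ → ℝ) (δ s : ℝ) : ℝ := trc δ s * (p' s / s)

lemma wtr_zero {p' : ℝ → ℝ} {δ s : ℝ} (hδ : 0 < δ) (h : s ≤ δ) : wtr p' δ s = 0 := by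
  simp [wtr, trc_zero hδ h]

lemma wtr_cont {p' : ℝ → ℝ} (hp' : ContinuousOn p' (Ioi 0)) {δ : ℝ} (hδ : 0 < δ) :
    Continuous (wtr p' δ) := by
  rw [continuous_iff_continuousAt]
  intro s
  rcases lt_or_ge s δ with h | h
  · have : (fun _ => (0:ℝ)) =ᶠ[𝓝 s] wtr p' δ := by
      filter_upwards [Iio_mem_nhds h] with t ht
      exact (wtr_zero hδ (le_of_lt ht)).symm
    exact continuousAt_const.congr this
  · have hs : 0 < s := hδ.trans_le h
    exact (trc_cont δ).continuousAt.mul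
      ((hp'.continuousAt (Ioi_mem_nhds hs)).div continuousAt_id hs.ne')

/-- antiderivative of the truncated derivative of `p` over `s`. -/
def gtr (p' : ℝ → ℝ) (δ s : ℝ) : ℝ := ∫ t in (0:ℝ)..s, wtr p' δ t
/-- truncated pressure -/
def Htr (p' : ℝ → ℝ) (δ s : ℝ) : ℝ := ∫ t in (0:ℝ)..s, t * wtr p' δ t

section
variable {p p' : ℝ → ℝ} {δ : ℝ}

lemma gtr_deriv
    (hp'_cont : ContinuousOn p' (Ioi 0))
    (hδ : 0 < δ)
    (s : ℝ) : HasDerivAt (gtr p' δ) (wtr p' δ s) s :=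
  ((wtr_cont hp'_cont hδ).integral_hasStrictDerivAt 0 s).hasDerivAt

lemma Htr_deriv
    (hp'_cont : ContinuousOn p' (Ioi 0))
    (hδ : 0 < δ)
    (s : ℝ) : HasDerivAt (Htr p' δ) (s * wtr p' δ s) s :=
  ((continuous_id.mul (wtr_cont hp'_cont hδ)).integral_hasStrictDerivAt 0 s).hasDerivAt

lemma gtr_zero
    (hδ : 0 < δ)
    {s : ℝ} (h : s ≤ δ) : gtr p' δ s = 0 := by
  unfold gtr
  rw [intervalIntegral.integral_congr (g := fun _ => 0)]
  · simp
  · intro t ht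
    rw [mem_uIcc] at ht
    exact wtr_zero hδ (by rcases ht with h1 | h1 <;> linarith [h1.1, h1.2])

lemma Htr_zero
    (hδ : 0 < δ)
    {s : ℝ} (h : s ≤ δ) : Htr p' δ s = 0 := by
  unfold Htr
  rw [intervalIntegral.integral_congr (g := fun _ => 0)]
  · simp
  · intro t ht
    rw [mem_uIcc] at ht
    simp only
    rw [wtr_zero hδ (by rcases ht with h1 | h1 <;> linarith [h1.1, h1.2]), mul_zero]

lemma s_wtr {s : ℝ} (hs : 0 < s) : s * wtr p' δ s = trc δ s * p' s := by
  unfold wtr; field_simp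

lemma p_mono
    (hp_cont : ContinuousOn p (Ici 0))
    (hp_deriv : ∀ s, 0 < s → HasDerivAt p (p' s) s)
    (hp'_nonneg : ∀ s, 0 < s → 0 ≤ p' s)
    : MonotoneOn p (Ici 0) := by
  refine monotoneOn_of_deriv_nonneg (convex_Ici 0) hp_cont ?_ ?_
  · rw [interior_Ici]; intro x hx; exact (hp_deriv x hx).differentiableAt.differentiableWithinAt
  · rw [interior_Ici]; intro x hx; rw [(hp_deriv x hx).deriv]; exact hp'_nonneg x hx

lemma Htr_nonneg
    (hp'_cont : ContinuousOn p' (Ioi 0))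
    (hp'_nonneg : ∀ s, 0 < s → 0 ≤ p' s)
    (hδ : 0 < δ)
    {s : ℝ} (hs : 0 ≤ s) : 0 ≤ Htr p' δ s := by
  refine intervalIntegral.integral_nonneg hs fun t ht => ?_
  rcases ht.1.eq_or_lt with h | h
  · simp [← h]
  · rw [s_wtr h]; exact mul_nonneg (trc_nonneg _ _) (hp'_nonneg t h)

lemma Htr_le
    (hp_cont : ContinuousOn p (Ici 0))
    (hp0 : p 0 = 0)
    (hp_deriv : ∀ s, 0 < s → HasDerivAt p (p' s) s)
    (hp'_cont : ContinuousOn p' (Ioi 0))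
    (hp'_nonneg : ∀ s, 0 < s → 0 ≤ p' s)
    (hδ : 0 < δ)
    {s : ℝ} (hs : 0 ≤ s) : Htr p' δ s ≤ p s := by
  have hHc : Continuous (Htr p' δ) :=
    continuous_iff_continuousAt.2 fun s => (Htr_deriv hp'_cont hδ s).continuousAt
  have m : MonotoneOn (fun s => p s - Htr p' δ s) (Ici 0) := by
    refine monotoneOn_of_deriv_nonneg (convex_Ici 0) (hp_cont.sub hHc.continuousOn) ?_ ?_
    · rw [interior_Ici]; intro x hx
      exact ((hp_deriv x hx).sub (Htr_deriv hp'_cont hδ x)).differentiableAt.differentiableWithinAt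
    · rw [interior_Ici]; intro x hx
      have hd : deriv (fun s => p s - Htr p' δ s) x = _ :=
        ((hp_deriv x hx).sub (Htr_deriv hp'_cont hδ x)).deriv
      rw [hd, s_wtr hx]
      nlinarith [hp'_nonneg x hx, trc_le_one δ x]
  have := m self_mem_Ici hs hs
  simp only [hp0, Htr_zero hδ hδ.le] at this
  linarith

lemma Htr_ge
    (hp_cont : ContinuousOn p (Ici 0))
    (hp_deriv : ∀ s, 0 < s → HasDerivAt p (p' s) s)
    (hp'_cont : ContinuousOn p' (Ioi 0))
    (hp'_nonneg : ∀ s, 0 < s → 0 ≤ p' s)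
    (hδ : 0 < δ)
    {s : ℝ} (hs : 0 ≤ s) : p s - p (2 * δ) ≤ Htr p' δ s := by
  have hHc : Continuous (Htr p' δ) :=
    continuous_iff_continuousAt.2 fun s => (Htr_deriv hp'_cont hδ s).continuousAt
  rcases le_total s (2 * δ) with h | h
  · have h1 := p_mono hp_cont hp_deriv hp'_nonneg hs (show 0 ≤ 2 * δ by linarith) h
    have h2 := Htr_nonneg hp'_cont hp'_nonneg hδ hs
    linarith
  · have m : AntitoneOn (fun s => p s - Htr p' δ s) (Ici (2 * δ)) := by
      refine antitoneOn_of_deriv_nonpos (convex_Ici _)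
        ((hp_cont.mono (Ici_subset_Ici.2 (by linarith))).sub hHc.continuousOn) ?_ ?_
      · rw [interior_Ici]; intro x hx
        have hx0 : 0 < x := lt_trans (by linarith) hx
        exact ((hp_deriv x hx0).sub
          (Htr_deriv hp'_cont hδ x)).differentiableAt.differentiableWithinAt
      · rw [interior_Ici]; intro x hx
        have hx0 : 0 < x := lt_trans (by linarith) hx
        have hd : deriv (fun s => p s - Htr p' δ s) x = _ :=
          ((hp_deriv x hx0).sub (Htr_deriv hp'_cont hδ x)).deriv
        rw [hd, s_wtr hx0,
          trc_one hδ (le_of_lt hx)]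
        simp
    have := m self_mem_Ici h h
    have h2 := Htr_nonneg (p' := p') hp'_cont hp'_nonneg hδ (show 0 ≤ 2 * δ by linarith)
    simp only at this
    linarith
end

/-- Smooth cutoffs exhausting the space. -/
lemma exists_cutoff : ∃ (ζ : ℕ → E3 → ℝ) (C : ℝ), (∀ n, ContDiff ℝ 1 (ζ n)) ∧
    (∀ n, HasCompactSupport (ζ n)) ∧ (∀ n x, |ζ n x| ≤ C) ∧
    (∀ n i x, |pd (ζ n) i x| ≤ C) ∧ (∀ x, Tendsto (fun n => ζ n x) atTop (𝓝 1)) ∧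
    (∀ i x, Tendsto (fun n => pd (ζ n) i x) atTop (𝓝 0)) := by
  let f : ContDiffBump (0 : E3) := ⟨1, 2, by norm_num, by norm_num⟩
  have hf : ContDiff ℝ 1 f := f.contDiff
  have hc : HasCompactSupport f := f.hasCompactSupport
  have hb : ∀ i, ∃ C, ∀ x, |pd f i x| ≤ C := fun i =>
    (pd_continuous hf i).bounded_above_of_compact_support (pd_hasCompactSupport hc i)
  choose C hC using hb
  have hC0 : ∀ i, 0 ≤ C i := fun i => (abs_nonneg _).trans (hC i 0)
  have hCS : ∀ i, C i ≤ 1 + ∑ j, C j := fun i => by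
    have := Finset.single_le_sum (fun j _ => hC0 j) (Finset.mem_univ i)
    linarith
  have hpd : ∀ n i x, pd (fun x => f (eps n • x)) i x = eps n * pd f i (eps n • x) := by
    intro n i x
    unfold pd
    have h1 : HasFDerivAt f (fderiv ℝ f (eps n • x)) (eps n • x) :=
      (hf.differentiable (by norm_num) _).hasFDerivAt
    have h2 : HasFDerivAt (fun x : E3 => eps n • x) (eps n • (ContinuousLinearMap.id ℝ E3)) x :=
      (hasFDerivAt_id x).const_smul (eps n)
    have := (h1.comp x h2).fderiv
    change fderiv ℝ (f ∘ fun x => eps n • x) x _ = _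
    rw [this]; simp
  have hbd : ∀ n i x, |pd (fun x => f (eps n • x)) i x| ≤ eps n * C i := fun n i x => by
    rw [hpd, abs_mul, abs_of_pos (eps_pos n)]
    exact mul_le_mul_of_nonneg_left (hC i _) (eps_pos n).le
  refine ⟨fun n x => f (eps n • x), 1 + ∑ i, C i, ?_, ?_, ?_, ?_, ?_, ?_⟩
  · intro n; exact hf.comp (by fun_prop)
  · intro n; exact hc.comp_smul (eps_pos n).ne'
  · intro n x
    rw [abs_of_nonneg (f.nonneg)]
    have := Finset.sum_nonneg (fun i (_ : i ∈ Finset.univ) => hC0 i)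
    exact f.le_one.trans (by linarith)
  · intro n i x
    refine (hbd n i x).trans (le_trans ?_ (hCS i))
    nlinarith [eps_le_one n, hC0 i]
  · intro x
    have h1 : f 0 = 1 := f.one_of_mem_closedBall (by simp [f])
    have h2 : Tendsto (fun n => eps n • x) atTop (𝓝 0) := by
      simpa using eps_tendsto.smul_const x
    have := (f.continuous.tendsto 0).comp h2
    rwa [h1] at this
  · intro i x
    refine squeeze_zero_norm (fun n => hbd n i x) ?_
    simpa using eps_tendsto.mul_const (C i)

section
variable {v : Fin 3 → E3 → ℝ} {dv : Fin 3 → Fin 3 → E3 → ℝ} {vn : ℕ → Fin 3 → E3 → ℝ}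
  {r : E3 → ℝ} {M : ℝ}

lemma memLp_of_finite_supp {δ : ℝ} (hrm : Measurable r)
    (hr0 : ∀ x, 0 ≤ r x) (hrM : ∀ x, r x ≤ M) (hfin : volume {x | δ < r x} ≠ ⊤)
    {b : ℝ → ℝ} (hb : Continuous b) (hb0 : ∀ s, s ≤ δ → b s = 0) (q : ENNReal) :
    MemLp (fun x => b (r x)) q volume := by
  obtain ⟨C, -, hC⟩ := bdd_on_Icc hb M
  have hms : MeasurableSet {x | δ < r x} := measurableSet_lt measurable_const hrm
  have h1 : MemLp ({x | δ < r x}.indicator fun _ => (1:ℝ)) q volume :=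
    memLp_indicator_const q hms 1 (Or.inr hfin)
  have h2 := memLp_bdd_mul (C := C) h1 (c := fun x => b (r x))
    (hb.measurable.comp hrm).aestronglyMeasurable
    (Eventually.of_forall fun x => hC _ (hr0 x) (hrM x))
  refine h2.ae_eq (Eventually.of_forall fun x => ?_)
  by_cases hx : δ < r x
  · simp [indicator, hx]
  · simp [indicator, hx, hb0 _ (not_lt.1 hx)]

lemma renorm_global (hV : Vel v dv vn) (hrm : Measurable r) (hr0 : ∀ x, 0 ≤ r x)
    (hrM : ∀ x, r x ≤ M)
    (mass : ∀ φ : E3 → ℝ, ContDiff ℝ ((⊤ : ℕ∞) : WithTop ℕ∞) φ → HasCompactSupport φ →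
      ∫ x, r x * (∑ i, v i x * pd φ i x) = 0)
    {g g' H : ℝ → ℝ} (hg : ∀ s, HasDerivAt g (g' s) s) (hg' : Continuous g')
    (hH : ∀ s, HasDerivAt H (s * g' s) s) {δ : ℝ} (hfin : volume {x | δ < r x} ≠ ⊤)
    (hg0 : ∀ s, s ≤ δ → g s = 0) (hH0 : ∀ s, s ≤ δ → H s = 0) :
    ∑ i, ∫ x, H (r x) * dv i i x = 0 := by
  obtain ⟨ζ, C, hζ, hζc, hζb, hζd, hζ1, hζ0⟩ := exists_cutoff
  have h65 := holder65
  have hgc : ContDiff ℝ 1 g := contDiff_one_of_deriv hg hg'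
  have hHc : ContDiff ℝ 1 H := contDiff_one_of_deriv hH (continuous_id.mul hg')
  have hbc : Continuous fun s => s * g s - H s :=
    (continuous_id.mul hgc.continuous).sub hHc.continuous
  have B := memLp_of_finite_supp hrm hr0 hrM hfin hbc (fun s hs => by simp [hg0 s hs, hH0 s hs])
    (ENNReal.ofReal (6/5))
  have B2 := memLp_of_finite_supp hrm hr0 hrM hfin hHc.continuous hH0 2
  have L1 : ∀ i, Tendsto (fun n => ∫ x, (r x * g (r x) - H (r x)) * pd (ζ n) i x * v i x) atTop
      (𝓝 (∫ x, (r x * g (r x) - H (r x)) * 0 * v i x)) := fun i =>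
    conv_bdd (p := ENNReal.ofReal (6/5)) (q := 6) (C := C) (gn := fun _ => v i)
      (cn := fun n => pd (ζ n) i) (c := fun _ => 0) B (hV.L6 i) (fun _ => hV.L6 i) (by simp)
      (fun n => (pd_continuous (hζ n) i).aestronglyMeasurable)
      (fun n => Eventually.of_forall fun x => hζd n i x)
      (Eventually.of_forall fun x => hζ0 i x)
  have L2 : ∀ i, Tendsto (fun n => ∫ x, H (r x) * ζ n x * dv i i x) atTop
      (𝓝 (∫ x, H (r x) * 1 * dv i i x)) := fun i =>
    conv_bdd (p := 2) (q := 2) (C := C) (gn := fun _ => dv i i)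
      (cn := fun n => ζ n) (c := fun _ => 1) B2 (hV.dL2 i i) (fun _ => hV.dL2 i i) (by simp)
      (fun n => (hζ n).continuous.aestronglyMeasurable)
      (fun n => Eventually.of_forall fun x => hζb n x)
      (Eventually.of_forall fun x => hζ1 x)
  have T1 := tendsto_finsetSum Finset.univ fun i (_ : i ∈ Finset.univ) => L1 i
  have T2 := tendsto_finsetSum Finset.univ fun i (_ : i ∈ Finset.univ) => L2 i
  have key : ∀ n, ∑ i, ∫ x, (r x * g (r x) - H (r x)) * pd (ζ n) i x * v i x
      = ∑ i, ∫ x, H (r x) * ζ n x * dv i i x := fun n => by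
    have := renorm hV hrm hr0 hrM mass hg hg' hH (hζ n) (hζc n)
    simpa only [mul_comm (pd _ _ _), mul_comm (ζ n _)] using this
  simp_rw [key] at T1
  have := tendsto_nhds_unique T1 T2
  simpa using this.symm

lemma press_div (hV : Vel v dv vn) (hrm : Measurable r) (hr0 : ∀ x, 0 ≤ r x)
    (hrM : ∀ x, r x ≤ M)
    (mass : ∀ φ : E3 → ℝ, ContDiff ℝ ((⊤ : ℕ∞) : WithTop ℕ∞) φ → HasCompactSupport φ →
      ∫ x, r x * (∑ i, v i x * pd φ i x) = 0)
    {p p' : ℝ → ℝ} (hp_cont : ContinuousOn p (Ici 0)) (hp0 : p 0 = 0)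
    (hp_deriv : ∀ s, 0 < s → HasDerivAt p (p' s) s)
    (hp'_cont : ContinuousOn p' (Ioi 0))
    (hp'_nonneg : ∀ s, 0 < s → 0 ≤ p' s)
    (hfin : ∀ δ, 0 < δ → volume {x | δ < r x} ≠ ⊤)
    (hpL : MemLp (fun x => p (r x)) 2 volume) :
    ∑ i, ∫ x, p (r x) * dv i i x = 0 := by
  have key : ∀ n, ∑ i, ∫ x, Htr p' (eps n) (r x) * dv i i x = 0 := fun n =>
    renorm_global hV hrm hr0 hrM mass (gtr_deriv hp'_cont (eps_pos n))
      (wtr_cont hp'_cont (eps_pos n)) (Htr_deriv hp'_cont (eps_pos n)) (hfin _ (eps_pos n))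
      (fun s hs => gtr_zero (eps_pos n) hs) (fun s hs => Htr_zero (eps_pos n) hs)
  have hlimp : Tendsto (fun n => p (2 * eps n)) atTop (𝓝 0) := by
    have h1 : Tendsto (fun n => 2 * eps n) atTop (𝓝[Ici 0] 0) := by
      refine tendsto_nhdsWithin_iff.2 ⟨by simpa using eps_tendsto.const_mul 2, ?_⟩
      exact Eventually.of_forall fun n => by
        have := eps_pos n; simp only [mem_Ici]; linarith
    have := (hp_cont 0 self_mem_Ici).tendsto.comp h1
    rwa [hp0] at this
  have hpt : ∀ s, 0 ≤ s → Tendsto (fun n => Htr p' (eps n) s) atTop (𝓝 (p s)) := fun s hs => by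
    refine tendsto_of_tendsto_of_tendsto_of_le_of_le (g := fun n => p s - p (2 * eps n))
      (h := fun _ => p s) (by simpa using hlimp.const_sub (p s)) tendsto_const_nhds ?_ ?_
    · intro n; exact Htr_ge hp_cont hp_deriv hp'_cont hp'_nonneg (eps_pos n) hs
    · intro n; exact Htr_le hp_cont hp0 hp_deriv hp'_cont hp'_nonneg (eps_pos n) hs
  have T := tendsto_finsetSum Finset.univ fun i (_ : i ∈ (Finset.univ : Finset (Fin 3))) =>
    (tendsto_integral_of_dominated_convergence (μ := volume)
      (F := fun n x => Htr p' (eps n) (r x) * dv i i x)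
      (f := fun x => p (r x) * dv i i x) (fun x => ‖p (r x) * dv i i x‖) ?_ ?_ ?_ ?_)
  · simp_rw [key] at T
    exact (tendsto_nhds_unique T tendsto_const_nhds)
  · intro n
    have hHc : Continuous (Htr p' (eps n)) :=
      continuous_iff_continuousAt.2 fun s => (Htr_deriv hp'_cont (eps_pos n) s).continuousAt
    exact (hHc.measurable.comp hrm).aestronglyMeasurable.mul (hV.dL2 i i).1
  · exact (integrable_mul_Lp (p := 2) (q := 2) hpL (hV.dL2 i i)).norm
  · intro n
    refine Eventually.of_forall fun x => ?_
    have h1 := Htr_nonneg hp'_cont hp'_nonneg (eps_pos n) (hr0 x)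
    have h2 := Htr_le hp_cont hp0 hp_deriv hp'_cont hp'_nonneg (eps_pos n) (hr0 x)
    rw [norm_mul, norm_mul]
    refine mul_le_mul_of_nonneg_right ?_ (norm_nonneg _)
    rw [Real.norm_of_nonneg h1, Real.norm_of_nonneg (h1.trans h2)]
    exact h2
  · exact Eventually.of_forall fun x => (hpt _ (hr0 x)).mul_const _
end


section
variable {v : Fin 3 → E3 → ℝ} {dv : Fin 3 → Fin 3 → E3 → ℝ} {vn : ℕ → Fin 3 → E3 → ℝ}

lemma swap_int {a b : E3 → ℝ} (ha : ContDiff ℝ ((⊤ : ℕ∞) : WithTop ℕ∞) a)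
    (hb : ContDiff ℝ ((⊤ : ℕ∞) : WithTop ℕ∞) b) (hbc : HasCompactSupport b) (i j : Fin 3) :
    ∫ x, pd a j x * pd b i x = ∫ x, pd a i x * pd b j x := by
  rw [ibp (smooth_one (pd_smooth ha j)) (smooth_one hb) hbc i,
    ibp (smooth_one (pd_smooth ha i)) (smooth_one hb) hbc j]
  simp_rw [pd_comm ha j i]

lemma Vel.pair_lim (hV : Vel v dv vn) (i j k l : Fin 3) :
    Tendsto (fun n => ∫ x, pd (vn n i) j x * pd (vn n k) l x) atTop
      (𝓝 (∫ x, dv i j x * dv k l x)) :=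
  conv_Lp2 (p := 2) (q := 2) (hV.dL2 i j) (fun n => hV.memLp_pd n i j 2) (hV.lim2 i j)
    (hV.dL2 k l) (fun n => hV.memLp_pd n k l 2) (hV.lim2 k l)

lemma Vel.swap (hV : Vel v dv vn) (i j : Fin 3) :
    ∫ x, dv i j x * dv j i x = ∫ x, dv i i x * dv j j x := by
  have h1 := hV.pair_lim i j j i
  have h2 := hV.pair_lim i i j j
  simp_rw [fun n => swap_int (hV.smooth n i) (hV.smooth n j) (hV.cpt n j) i j] at h1
  exact tendsto_nhds_unique h1 h2

lemma Vel.dv_zero (hV : Vel v dv vn) {μ η : ℝ} (hμ : 0 < μ) (hη : 0 ≤ η)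
    (hS : μ * (∑ i, ∑ j, ((∫ x, dv i j x * dv i j x) + ∫ x, dv i j x * dv j i x))
      + (η - 2 / 3 * μ) * (∑ i, ∑ j, ∫ x, dv i i x * dv j j x) = 0) (i j : Fin 3) :
    dv i j =ᵐ[volume] 0 := by
  have I : ∀ i j k l, Integrable (fun x => dv i j x * dv k l x) volume := fun i j k l =>
    integrable_mul_Lp (p := 2) (q := 2) (hV.dL2 i j) (hV.dL2 k l)
  have hdiv : 0 ≤ ∑ i, ∑ j, ∫ x, dv i i x * dv j j x := by
    have : ∑ i, ∑ j, ∫ x, dv i i x * dv j j x = ∫ x, (∑ i, dv i i x) * (∑ i, dv i i x) := by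
      simp_rw [Finset.sum_mul_sum]
      rw [integral_finsetSum]
      · refine Finset.sum_congr rfl fun i _ => ?_
        rw [integral_finsetSum]
        intro j _; exact I _ _ _ _
      · intro i _; exact integrable_finsetSum _ fun j _ => I _ _ _ _
    rw [this]
    exact integral_nonneg fun x => mul_self_nonneg _
  simp_rw [hV.swap, Finset.sum_add_distrib] at hS
  have hpos : ∀ i j, 0 ≤ ∫ x, dv i j x * dv i j x := fun i j =>
    integral_nonneg fun x => mul_self_nonneg _
  have hsum : ∑ i, ∑ j, ∫ x, dv i j x * dv i j x ≤ 0 := by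
    by_contra hc
    push Not at hc
    nlinarith [mul_pos hμ hc, mul_nonneg hη hdiv, mul_nonneg hμ.le hdiv]
  have hij : ∫ x, dv i j x * dv i j x = 0 := by
    refine le_antisymm (le_trans ?_ hsum) (hpos i j)
    refine le_trans ?_ (Finset.single_le_sum (f := fun i => ∑ j, ∫ x, dv i j x * dv i j x)
      (fun i _ => Finset.sum_nonneg fun j _ => hpos i j) (Finset.mem_univ i))
    exact Finset.single_le_sum (f := fun j => ∫ x, dv i j x * dv i j x)
      (fun j _ => hpos i j) (Finset.mem_univ j)
  rw [integral_eq_zero_iff_of_nonneg (fun x => mul_self_nonneg _) (I _ _ _ _)] at hij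
  filter_upwards [hij] with x hx
  simpa using hx

lemma Vel.v_zero (hV : Vel v dv vn) (h0 : ∀ i j, dv i j =ᵐ[volume] 0) (i : Fin 3) :
    v i =ᵐ[volume] 0 := by
  have h1 : ∀ j, Tendsto (fun n => eLpNorm (pd (vn n i) j) 2 volume) atTop (𝓝 0) := fun j => by
    refine (hV.lim2 i j).congr fun n => eLpNorm_congr_ae ?_
    filter_upwards [h0 i j] with x hx
    simp [hx]
  have h2 : Tendsto (fun n => eLpNorm (fderiv ℝ (vn n i)) 2 volume) atTop (𝓝 0) := by
    have := tendsto_finsetSum Finset.univ fun j (_ : j ∈ (Finset.univ : Finset (Fin 3))) => h1 j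
    simp only [Finset.sum_const_zero] at this
    exact tendsto_of_tendsto_of_tendsto_of_le_of_le tendsto_const_nhds this (fun _ => zero_le)
      fun n => eLpNorm_fderiv_le (smooth_one (hV.smooth n i))
  have h3 : Tendsto (fun n => eLpNorm (vn n i) 6 volume) atTop (𝓝 0) := by
    have hs : ∀ n, eLpNorm (vn n i) (6 : NNReal) volume ≤
        eLpNormLESNormFDerivOfEqInnerConst (volume : Measure E3) 2 *
          eLpNorm (fderiv ℝ (vn n i)) (2 : NNReal) volume := fun n =>
      eLpNorm_le_eLpNorm_fderiv_of_eq_inner (μ := volume) (p := 2) (p' := 6)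
        (smooth_one (hV.smooth n i)) (hV.cpt n i) (by norm_num) (by simp)
        (by simp; norm_num)
    have := ENNReal.Tendsto.const_mul (a := (eLpNormLESNormFDerivOfEqInnerConst
      (volume : Measure E3) 2 : ENNReal)) h2 (Or.inr (by simp))
    rw [mul_zero] at this
    refine tendsto_of_tendsto_of_tendsto_of_le_of_le tendsto_const_nhds this (fun _ => zero_le)
      fun n => ?_
    simpa using hs n
  have h4 : eLpNorm (v i) 6 volume = 0 := by
    have := (hV.lim6 i).add h3
    rw [add_zero] at this
    refine le_antisymm (ge_of_tendsto' this fun n => ?_) zero_le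
    have e : v i = (fun x => v i x - vn n i x) + vn n i := by ext x; simp
    conv_lhs => rw [e]
    refine (eLpNorm_add_le ?_ (hV.memLp_vn n i 6).1 (by norm_num)).trans ?_
    · exact ((hV.L6 i).sub (hV.memLp_vn n i 6)).1
    · gcongr
      have := eLpNorm_sub_comm (v i) (vn n i) 6 volume
      exact this.le
  exact (eLpNorm_eq_zero_iff (hV.L6 i).1 (by norm_num)).1 h4
end


lemma scalar_facts {p p' P P' : ℝ → ℝ} {γ : ℝ} (hγ : 1 < γ)
    (hp_cont : ContinuousOn p (Ici 0)) (hp0 : p 0 = 0)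
    (hp_nonneg : ∀ s, 0 ≤ s → 0 ≤ p s)
    (hp_deriv : ∀ s, 0 < s → HasDerivAt p (p' s) s)
    (hp'_nonneg : ∀ s, 0 < s → 0 ≤ p' s)
    (hP0 : P 0 = 0)
    (hP_deriv : ∀ s, 0 < s → HasDerivAt P (P' s) s)
    (hP_ode : ∀ s, 0 < s → s * P' s - P s = p s)
    (hliminf1 : ∃ c > 0, ∀ᶠ s in 𝓝[>] (0 : ℝ), c ≤ P s / p s)
    (hliminf2 : ∃ c > 0, ∀ᶠ s in 𝓝[>] (0 : ℝ), c ≤ p s / s ^ γ) {M : ℝ} (hM : 0 ≤ M) :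
    ∃ C, 0 ≤ C ∧ ∀ s, 0 ≤ s → s ≤ M → 0 ≤ P s ∧ p s ≤ C * P s ∧ s ^ γ ≤ C * P s := by
  obtain ⟨c1, hc1, h1⟩ := hliminf1
  obtain ⟨c2, hc2, h2⟩ := hliminf2
  obtain ⟨ε, hε, hε'⟩ := (mem_nhdsGT_iff_exists_Ioo_subset).1 (h1.and h2)
  have hε0 : 0 < ε := hε
  have small : ∀ s, 0 < s → s < ε → 0 < p s ∧ c1 * p s ≤ P s ∧ c2 * s ^ γ ≤ p s := by
    intro s h0 hs
    obtain ⟨a, b⟩ := hε' ⟨h0, hs⟩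
    have hsγ : 0 < s ^ γ := Real.rpow_pos_of_pos h0 _
    have hb : c2 * s ^ γ ≤ p s := (le_div_iff₀ hsγ).1 b
    have hp : 0 < p s := lt_of_lt_of_le (mul_pos hc2 hsγ) hb
    exact ⟨hp, (le_div_iff₀ hp).1 a, hb⟩
  set s0 := ε / 2 with hs0
  have hs0p : 0 < s0 := by positivity
  have hPs0 : 0 < P s0 := by
    obtain ⟨a, b, c⟩ := small s0 hs0p (by linarith)
    exact lt_of_lt_of_le (mul_pos hc1 a) b
  have hd : ∀ x, 0 < x → HasDerivAt (fun s => P s / s) ((P' x * x - P x * 1) / x ^ 2) x :=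
    fun x hx => (hP_deriv x hx).div (hasDerivAt_id x) hx.ne'
  have mono : MonotoneOn (fun s => P s / s) (Ici s0) := by
    refine monotoneOn_of_deriv_nonneg (convex_Ici _) ?_ ?_ ?_
    · intro x hx
      exact (hd x (hs0p.trans_le hx)).continuousAt.continuousWithinAt
    · rw [interior_Ici]; intro x hx
      exact (hd x (hs0p.trans hx)).differentiableAt.differentiableWithinAt
    · rw [interior_Ici]; intro x hx
      have hx0 := hs0p.trans hx
      rw [(hd x hx0).deriv]
      refine div_nonneg ?_ (sq_nonneg x)
      have := hP_ode x hx0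
      have := hp_nonneg x hx0.le
      linarith
  have big : ∀ s, s0 ≤ s → P s0 ≤ P s := by
    intro s hs
    have hsp := hs0p.trans_le hs
    have := mono self_mem_Ici hs hs
    simp only at this
    rw [div_le_div_iff₀ hs0p hsp] at this
    have h3 : P s0 * s0 ≤ P s0 * s := mul_le_mul_of_nonneg_left hs hPs0.le
    exact le_of_mul_le_mul_right (h3.trans this) hs0p
  have pM : 0 ≤ p M := hp_nonneg M hM
  have MG : 0 ≤ M ^ γ := Real.rpow_nonneg hM _
  refine ⟨1 / c1 + 1 / (c1 * c2) + p M / P s0 + M ^ γ / P s0, by positivity, ?_⟩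
  intro s hs hsM
  rcases hs.eq_or_lt with rfl | hsp
  · simp [hP0, hp0, Real.zero_rpow (show γ ≠ 0 by linarith)]
  have q1 : 0 ≤ 1 / c1 := by positivity
  have q2 : 0 ≤ 1 / (c1 * c2) := by positivity
  have q3 : 0 ≤ p M / P s0 := by positivity
  have q4 : 0 ≤ M ^ γ / P s0 := by positivity
  rcases lt_or_ge s s0 with h | h
  · obtain ⟨a, b, c⟩ := small s hsp (by linarith)
    have hP : 0 < P s := lt_of_lt_of_le (mul_pos hc1 a) b
    refine ⟨hP.le, ?_, ?_⟩
    · have : p s ≤ 1 / c1 * P s := by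
        rw [div_mul_eq_mul_div, one_mul, le_div_iff₀ hc1]; linarith
      nlinarith
    · have : s ^ γ ≤ 1 / (c1 * c2) * P s := by
        rw [div_mul_eq_mul_div, one_mul, le_div_iff₀ (by positivity)]; nlinarith
      nlinarith
  · have hP := big s h
    have hPp : 0 < P s := hPs0.trans_le hP
    refine ⟨hPp.le, ?_, ?_⟩
    · have m := p_mono hp_cont hp_deriv hp'_nonneg hs hM hsM
      have : p M ≤ p M / P s0 * P s := by
        rw [div_mul_eq_mul_div, le_div_iff₀ hPs0]
        exact mul_le_mul_of_nonneg_left hP pM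
      nlinarith
    · have m : s ^ γ ≤ M ^ γ := Real.rpow_le_rpow hs hsM (by linarith)
      have : M ^ γ ≤ M ^ γ / P s0 * P s := by
        rw [div_mul_eq_mul_div, le_div_iff₀ hPs0]
        exact mul_le_mul_of_nonneg_left hP MG
      nlinarith

/-- bounded functions: the integrability exponent can be raised -/
lemma memLp_up {α : Type*} [MeasurableSpace α] {ν : Measure α} {f : α → ℝ} {a b C : ℝ}
    (ha : 0 < a) (hab : a ≤ b) (hC : ∀ x, |f x| ≤ C) (hf : MemLp f (ENNReal.ofReal a) ν) :
    MemLp f (ENNReal.ofReal b) ν := by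
  have hb : 0 < b := ha.trans_le hab
  have h1 := (integrable_norm_rpow_iff hf.1 (by simpa using ha) (by simp)).2 hf
  rw [ENNReal.toReal_ofReal ha.le] at h1
  refine (integrable_norm_rpow_iff hf.1 (by simpa using hb) (by simp)).1 ?_
  rw [ENNReal.toReal_ofReal hb.le]
  refine (h1.const_mul (C ^ (b - a))).mono' ?_ (Eventually.of_forall fun x => ?_)
  · exact (hf.1.norm.aemeasurable.pow_const b).aestronglyMeasurable
  · rw [Real.norm_of_nonneg (by positivity)]
    have hC0 : 0 ≤ C := (abs_nonneg _).trans (hC x)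
    rcases (norm_nonneg (f x)).eq_or_lt with h | h
    · rw [← h, Real.zero_rpow hb.ne', Real.zero_rpow ha.ne']; simp
    · have : ‖f x‖ ^ b = ‖f x‖ ^ (b - a) * ‖f x‖ ^ a := by
        rw [← Real.rpow_add h]; congr 1; ring
      rw [this]
      refine mul_le_mul_of_nonneg_right ?_ (by positivity)
      exact Real.rpow_le_rpow h.le (hC x) (by linarith)

section
variable {v : Fin 3 → E3 → ℝ} {dv : Fin 3 → Fin 3 → E3 → ℝ} {vn : ℕ → Fin 3 → E3 → ℝ}
  {r : E3 → ℝ} {M : ℝ}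

/-- Consequences of the finite energy. -/
lemma energy_facts (hV : Vel v dv vn) (hrm : Measurable r) (hr0 : ∀ x, 0 ≤ r x)
    (hrM : ∀ x, r x ≤ M) {p P : ℝ → ℝ} {γ C : ℝ} (hγ : 1 < γ) (hC : 0 ≤ C)
    (hp_cont : ContinuousOn p (Ici 0)) (hp_nonneg : ∀ s, 0 ≤ s → 0 ≤ p s)
    (hsc : ∀ s, 0 ≤ s → s ≤ M → 0 ≤ P s ∧ p s ≤ C * P s ∧ s ^ γ ≤ C * P s)
    (hE : Integrable (fun x => (1 / 2) * r x * (∑ i, (v i x) ^ 2) + P (r x)) volume) :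
    MemLp (fun x => p (r x)) 2 volume ∧ MemLp r (ENNReal.ofReal γ) volume ∧
      (∀ i j, Integrable (fun x => r x * v i x * v j x) volume) := by
  have hpm : Measurable fun x => p (r x) := by
    have h1 : Continuous fun s => p (max s 0) := by
      refine hp_cont.comp_continuous (by fun_prop) fun s => mem_Ici.2 (le_max_right _ _)
    have h2 : Measurable (fun x => p (max (r x) 0)) := h1.measurable.comp hrm
    have e : (fun x => p (r x)) = fun x => p (max (r x) 0) := by
      ext x; rw [max_eq_left (hr0 x)]
    rw [e]; exact h2
  have hkin : ∀ x, 0 ≤ (1 / 2) * r x * (∑ i, (v i x) ^ 2) := fun x =>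
    mul_nonneg (mul_nonneg (by norm_num) (hr0 x)) (Finset.sum_nonneg fun i _ => sq_nonneg _)
  have hp1 : Integrable (fun x => p (r x)) volume := by
    refine (hE.const_mul C).mono' hpm.aestronglyMeasurable (Eventually.of_forall fun x => ?_)
    obtain ⟨a, b, c⟩ := hsc _ (hr0 x) (hrM x)
    rw [Real.norm_of_nonneg (hp_nonneg _ (hr0 x))]
    have := mul_nonneg hC (hkin x)
    linarith
  have hpb : ∃ D, ∀ x, |p (r x)| ≤ D := by
    obtain ⟨D, hD⟩ := (isCompact_Icc (a := (0:ℝ)) (b := M)).exists_bound_of_continuousOn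
      (hp_cont.mono Icc_subset_Ici_self)
    exact ⟨D, fun x => hD _ ⟨hr0 x, hrM x⟩⟩
  obtain ⟨D, hD⟩ := hpb
  refine ⟨?_, ?_, ?_⟩
  · have := memLp_up (a := 1) (b := 2) one_pos (by norm_num) hD (by
      simpa using memLp_one_iff_integrable.2 hp1)
    simpa using this
  · have hγ0 : 0 < γ := by linarith
    refine (integrable_norm_rpow_iff hrm.aestronglyMeasurable (by simpa using hγ0) (by simp)).1 ?_
    rw [ENNReal.toReal_ofReal hγ0.le]
    refine (hE.const_mul C).mono' ?_ (Eventually.of_forall fun x => ?_)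
    · exact (hrm.norm.pow_const γ).aestronglyMeasurable
    · obtain ⟨a, b, c⟩ := hsc _ (hr0 x) (hrM x)
      rw [Real.norm_of_nonneg (by positivity), Real.norm_of_nonneg (hr0 x)]
      have := mul_nonneg hC (hkin x)
      linarith
  · intro i j
    refine (hE.const_mul 2).mono' ?_ (Eventually.of_forall fun x => ?_)
    · exact ((hrm.mul (hV.meas i)).mul (hV.meas j)).aestronglyMeasurable
    · obtain ⟨a, b, c⟩ := hsc _ (hr0 x) (hrM x)
      have hi := Finset.single_le_sum (f := fun i => (v i x) ^ 2) (fun i _ => sq_nonneg _)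
        (Finset.mem_univ i)
      have hj := Finset.single_le_sum (f := fun i => (v i x) ^ 2) (fun i _ => sq_nonneg _)
        (Finset.mem_univ j)
      have hab : |v i x * v j x| ≤ ∑ i, (v i x) ^ 2 := by
        rw [abs_le]; constructor <;> nlinarith [sq_nonneg (v i x + v j x), sq_nonneg (v i x - v j x)]
      rw [Real.norm_eq_abs, mul_assoc, abs_mul, abs_of_nonneg (hr0 x)]
      have := mul_le_mul_of_nonneg_left hab (hr0 x)
      linarith

lemma fin_meas (hr0 : ∀ x, 0 ≤ r x) {γ : ℝ} (hγ : 1 < γ)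
    (hrL : MemLp r (ENNReal.ofReal γ) volume) (δ : ℝ) (hδ : 0 < δ) :
    volume {x | δ < r x} ≠ ⊤ := by
  have h := meas_ge_le_mul_pow_eLpNorm_enorm volume (p := ENNReal.ofReal γ)
    (by simp; linarith) (by simp) hrL.1 (ε := ENNReal.ofReal δ) (by simpa using hδ) (by simp)
  refine ne_top_of_le_ne_top ?_ ((measure_mono ?_).trans h)
  · refine ENNReal.mul_ne_top ?_ ?_
    · exact ENNReal.rpow_ne_top_of_nonneg (by simp) (by simpa using hδ)
    · exact ENNReal.rpow_ne_top_of_nonneg (by simp) hrL.2.ne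
  · intro x hx
    simp only [mem_ofPred_eq] at hx ⊢
    rw [Real.enorm_of_nonneg (hr0 x)]
    exact ENNReal.ofReal_le_ofReal hx.le

lemma rv_L3 (hV : Vel v dv vn) (hrm : Measurable r) (hr0 : ∀ x, 0 ≤ r x)
    (hrM : ∀ x, r x ≤ M) (hK : ∀ i j, Integrable (fun x => r x * v i x * v j x) volume)
    (i : Fin 3) : MemLp (fun x => r x * v i x) 3 volume := by
  have hM : ∀ x, |r x| ≤ M := abs_le_of_bds hr0 hrM
  have h6 := rv_L6 hV hrm hM i
  have h2 : MemLp (fun x => r x * v i x) 2 volume := by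
    rw [memLp_two_iff_integrable_sq h6.1]
    have := (hK i i).bdd_mul (c := M) hrm.aestronglyMeasurable (Eventually.of_forall hM)
    refine this.congr (Eventually.of_forall fun x => ?_)
    simp only; ring
  exact memLp_interp h2 h6 (by norm_num) (by norm_num) (by norm_num) (by norm_num)

lemma holder362 : ENNReal.HolderTriple 3 6 2 := by
  have := holderTriple_ofReal (a := 3) (b := 6) (c := 2) (by norm_num) (by norm_num) (by norm_num)
    (by norm_num)
  simpa using this

/-- The convective term vanishes. -/
lemma convective (hV : Vel v dv vn) (hrm : Measurable r) (hr0 : ∀ x, 0 ≤ r x)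
    (hrM : ∀ x, r x ≤ M)
    (mass : ∀ φ : E3 → ℝ, ContDiff ℝ ((⊤ : ℕ∞) : WithTop ℕ∞) φ → HasCompactSupport φ →
      ∫ x, r x * (∑ i, v i x * pd φ i x) = 0)
    (hK : ∀ i j, Integrable (fun x => r x * v i x * v j x) volume) :
    (∀ i j, MemLp (fun x => r x * v i x * v j x) 2 volume) ∧
    ∑ i, ∑ k, ∫ x, r x * v i x * v k x * dv k i x = 0 := by
  have h362 := holder362
  have h3 := rv_L3 hV hrm hr0 hrM hK
  have hL2 : ∀ i j, MemLp (fun x => r x * v i x * v j x) 2 volume := fun i j =>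
    (hV.L6 j).mul (p := 3) (q := 6) (r := 2) (h3 i)
  refine ⟨hL2, ?_⟩
  have hL2n : ∀ n i j, MemLp (fun x => r x * v i x * vn n j x) 2 volume := fun n i j =>
    (hV.memLp_vn n j 6).mul (p := 3) (q := 6) (r := 2) (h3 i)
  have lim : ∀ i k, Tendsto (fun n => eLpNorm (fun x => r x * v i x * vn n k x
      - r x * v i x * v k x) 2 volume) atTop (𝓝 0) := fun i k => by
    have hb : ∀ n, eLpNorm (fun x => r x * v i x * vn n k x - r x * v i x * v k x) 2 volume ≤
        eLpNorm (fun x => r x * v i x) 3 volume *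
          eLpNorm (fun x => vn n k x - v k x) 6 volume := fun n => by
      have := eLpNorm_smul_le_mul_eLpNorm (p := 3) (q := 6) (r := 2) (μ := volume)
        (f := fun x => vn n k x - v k x) (φ := fun x => r x * v i x)
        ((hV.memLp_vn n k 6).sub (hV.L6 k)).1 (h3 i).1
      refine le_trans (le_of_eq ?_) this
      congr 1; ext x; simp; ring
    have := ENNReal.Tendsto.const_mul (a := eLpNorm (fun x => r x * v i x) 3 volume)
      (hV.lim6 k) (Or.inr (h3 i).2.ne)
    rw [mul_zero] at this
    exact tendsto_of_tendsto_of_tendsto_of_le_of_le tendsto_const_nhds this (fun _ => zero_le) hb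
  have L : ∀ i k, Tendsto (fun n => ∫ x, r x * v i x * vn n k x * pd (vn n k) i x) atTop
      (𝓝 (∫ x, r x * v i x * v k x * dv k i x)) := fun i k =>
    conv_Lp2 (p := 2) (q := 2) (hL2 i k) (fun n => hL2n n i k) (lim i k)
      (hV.dL2 k i) (fun n => hV.memLp_pd n k i 2) (hV.lim2 k i)
  have key : ∀ n, ∑ i, ∑ k, ∫ x, r x * v i x * vn n k x * pd (vn n k) i x = 0 := fun n => by
    have I : ∀ i k, Integrable (fun x => r x * v i x * vn n k x * pd (vn n k) i x) volume :=
      fun i k => integrable_mul_Lp (p := 2) (q := 2) (hL2n n i k) (hV.memLp_pd n k i 2)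
    have hsm : ∀ k, ContDiff ℝ ((⊤ : ℕ∞) : WithTop ℕ∞) (fun x => vn n k x * vn n k x) :=
      fun k => (hV.smooth n k).mul (hV.smooth n k)
    have m := mass (fun x => ∑ k, vn n k x * vn n k x)
      (ContDiff.sum fun k _ => hsm k)
      (by
        have : ∀ k, HasCompactSupport (fun x => vn n k x * vn n k x) := fun k =>
          (hV.cpt n k).mul_right
        simp only [Fin.sum_univ_three]
        exact ((this 0).add (this 1)).add (this 2))
    have hd : ∀ k x, DifferentiableAt ℝ (vn n k) x := fun k x =>
      (hV.smooth n k).differentiable (by norm_num) x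
    have hpd : ∀ i x, pd (fun x => ∑ k, vn n k x * vn n k x) i x =
        ∑ k, 2 * (vn n k x * pd (vn n k) i x) := fun i x => by
      rw [pd_sum Finset.univ (f := fun k x => vn n k x * vn n k x)
        (fun k _ => (hd k x).mul (hd k x))]
      refine Finset.sum_congr rfl fun k _ => ?_
      rw [pd_mul (hd k x) (hd k x)]; ring
    simp_rw [hpd] at m
    have e : ∀ x, r x * ∑ i, v i x * ∑ k, 2 * (vn n k x * pd (vn n k) i x) =
        2 * ∑ i, ∑ k, r x * v i x * vn n k x * pd (vn n k) i x := fun x => by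
      simp_rw [Finset.mul_sum]
      refine Finset.sum_congr rfl fun i _ => Finset.sum_congr rfl fun k _ => by ring
    simp_rw [e] at m
    rw [integral_const_mul, integral_finsetSum] at m
    · simp_rw [fun i => integral_finsetSum (μ := volume) Finset.univ
        (fun k (_ : k ∈ Finset.univ) => I i k)] at m
      linarith
    · intro i _; exact integrable_finsetSum _ fun k _ => I i k
  have T := tendsto_finsetSum Finset.univ fun i (_ : i ∈ Finset.univ) =>
    tendsto_finsetSum Finset.univ fun k (_ : k ∈ Finset.univ) => L i k
  simp_rw [key] at T
  exact tendsto_nhds_unique T tendsto_const_nhds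
end


section
variable {v : Fin 3 → E3 → ℝ} {dv : Fin 3 → Fin 3 → E3 → ℝ} {vn : ℕ → Fin 3 → E3 → ℝ}
  {r : E3 → ℝ} {M : ℝ}

lemma Smat_L2 (hV : Vel v dv vn) (μ η : ℝ) (i j : Fin 3) :
    MemLp (fun x => Smat μ η (fun a b => dv a b x) i j) 2 volume := by
  unfold Smat
  have ht : MemLp (fun x => ∑ k, dv k k x) 2 volume :=
    memLp_finsetSum _ fun k _ => hV.dL2 k k
  have h1 := (((hV.dL2 i j).add (hV.dL2 j i)).sub
    ((ht.const_mul (2/3)).mul_const (if i = j then (1:ℝ) else 0))).const_mul μ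
  have h2 := (ht.const_mul η).mul_const (if i = j then (1:ℝ) else 0)
  exact h1.add h2

lemma momentum_limit (hV : Vel v dv vn)
    {μ η : ℝ} {p : ℝ → ℝ} {dg : Fin 3 → E3 → ℝ}
    (hL2 : ∀ i j, MemLp (fun x => r x * v i x * v j x) 2 volume)
    (hconv : ∑ i, ∑ k, ∫ x, r x * v i x * v k x * dv k i x = 0)
    (hpL : MemLp (fun x => p (r x)) 2 volume)
    (hpdiv : ∑ i, ∫ x, p (r x) * dv i i x = 0)
    (hdg : ∀ i, MemLp (fun x => r x * dg i x) (ENNReal.ofReal (6/5)) volume)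
    (hpot : ∑ i, ∫ x, r x * dg i x * v i x = 0)
    (hmom : ∀ n, ∫ x, ((∑ i, ∑ j, r x * v i x * v j x * pd (vn n i) j x)
        + p (r x) * (∑ i, pd (vn n i) i x))
      = (∫ x, ∑ i, ∑ j, Smat μ η (fun a b => dv a b x) i j * pd (vn n i) j x)
        - ∫ x, ∑ i, r x * dg i x * vn n i x) :
    μ * (∑ i, ∑ j, ((∫ x, dv i j x * dv i j x) + ∫ x, dv i j x * dv j i x))
      + (η - 2 / 3 * μ) * (∑ i, ∑ j, ∫ x, dv i i x * dv j j x) = 0 := by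
  have h65 := holder65
  have T1 := tendsto_finsetSum Finset.univ fun i (_ : i ∈ Finset.univ) =>
    tendsto_finsetSum Finset.univ fun j (_ : j ∈ Finset.univ) =>
      conv_Lp (p := 2) (q := 2) (hL2 i j) (hV.dL2 i j) (fun n => hV.memLp_pd n i j 2) (hV.lim2 i j)
  have T2 := tendsto_finsetSum Finset.univ fun i (_ : i ∈ Finset.univ) =>
      conv_Lp (p := 2) (q := 2) hpL (hV.dL2 i i) (fun n => hV.memLp_pd n i i 2) (hV.lim2 i i)
  have T3 := tendsto_finsetSum Finset.univ fun i (_ : i ∈ Finset.univ) =>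
    tendsto_finsetSum Finset.univ fun j (_ : j ∈ Finset.univ) =>
      conv_Lp (p := 2) (q := 2) (Smat_L2 hV μ η i j) (hV.dL2 i j) (fun n => hV.memLp_pd n i j 2)
        (hV.lim2 i j)
  have T4 := tendsto_finsetSum Finset.univ fun i (_ : i ∈ Finset.univ) =>
      conv_Lp (p := ENNReal.ofReal (6/5)) (q := 6) (hdg i) (hV.L6 i) (fun n => hV.memLp_vn n i 6)
        (hV.lim6 i)
  have key : ∀ n, (∑ i, ∑ j, ∫ x, r x * v i x * v j x * pd (vn n i) j x)
      + (∑ i, ∫ x, p (r x) * pd (vn n i) i x) =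
      (∑ i, ∑ j, ∫ x, Smat μ η (fun a b => dv a b x) i j * pd (vn n i) j x)
      - ∑ i, ∫ x, r x * dg i x * vn n i x := fun n => by
    have I1 : ∀ i j, Integrable (fun x => r x * v i x * v j x * pd (vn n i) j x) volume :=
      fun i j => integrable_mul_Lp (p := 2) (q := 2) (hL2 i j) (hV.memLp_pd n i j 2)
    have I2 : ∀ i, Integrable (fun x => p (r x) * pd (vn n i) i x) volume :=
      fun i => integrable_mul_Lp (p := 2) (q := 2) hpL (hV.memLp_pd n i i 2)
    have I3 : ∀ i j, Integrable
      (fun x => Smat μ η (fun a b => dv a b x) i j * pd (vn n i) j x) volume :=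
      fun i j => integrable_mul_Lp (p := 2) (q := 2) (Smat_L2 hV μ η i j) (hV.memLp_pd n i j 2)
    have I4 : ∀ i, Integrable (fun x => r x * dg i x * vn n i x) volume :=
      fun i => integrable_mul_Lp (p := ENNReal.ofReal (6/5)) (q := 6) (hdg i) (hV.memLp_vn n i 6)
    have m := hmom n
    simp_rw [Finset.mul_sum] at m
    rw [integral_add (integrable_finsetSum _ fun i _ => integrable_finsetSum _ fun j _ => I1 i j)
      (integrable_finsetSum _ fun i _ => I2 i),
      integral_finsetSum _ (fun i _ => integrable_finsetSum _ fun j _ => I1 i j),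
      integral_finsetSum _ (fun i _ => I2 i),
      integral_finsetSum _ (fun i _ => integrable_finsetSum _ fun j _ => I3 i j),
      integral_finsetSum _ (fun i _ => I4 i)] at m
    simp_rw [fun i => integral_finsetSum (μ := volume) Finset.univ
        (fun k (_ : k ∈ Finset.univ) => I1 i k), fun i => integral_finsetSum (μ := volume) Finset.univ
        (fun k (_ : k ∈ Finset.univ) => I3 i k)] at m
    exact m
  have T := tendsto_nhds_unique ((T1.add T2).congr key) (T3.sub T4)
  rw [hpdiv, hpot] at T
  have hconv' : ∑ i, ∑ j, ∫ x, r x * v i x * v j x * dv i j x = 0 := by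
    rw [Finset.sum_comm, ← hconv]
    refine Finset.sum_congr rfl fun i _ => Finset.sum_congr rfl fun j _ => ?_
    congr 1; ext x; ring
  rw [hconv'] at T
  have I : ∀ i j k l, Integrable (fun x => dv i j x * dv k l x) volume := fun i j k l =>
    integrable_mul_Lp (p := 2) (q := 2) (hV.dL2 i j) (hV.dL2 k l)
  have I3 : ∀ i j, Integrable
      (fun x => Smat μ η (fun a b => dv a b x) i j * dv i j x) volume :=
      fun i j => integrable_mul_Lp (p := 2) (q := 2) (Smat_L2 hV μ η i j) (hV.dL2 i j)
  have e : ∑ i, ∑ j, ∫ x, Smat μ η (fun a b => dv a b x) i j * dv i j x =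
      μ * (∑ i, ∑ j, ((∫ x, dv i j x * dv i j x) + ∫ x, dv i j x * dv j i x))
      + (η - 2 / 3 * μ) * (∑ i, ∑ j, ∫ x, dv i i x * dv j j x) := by
    have a1 : ∑ i, ∑ j, ∫ x, Smat μ η (fun a b => dv a b x) i j * dv i j x =
        ∫ x, ∑ i, ∑ j, Smat μ η (fun a b => dv a b x) i j * dv i j x := by
      rw [integral_finsetSum _ (fun i _ => integrable_finsetSum _ fun j _ => I3 i j)]
      refine Finset.sum_congr rfl fun i _ => ?_
      rw [integral_finsetSum _ (fun j _ => I3 i j)]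
    have a2 : ∀ x, ∑ i, ∑ j, Smat μ η (fun a b => dv a b x) i j * dv i j x =
        μ * (∑ i, ∑ j, (dv i j x * dv i j x + dv i j x * dv j i x))
        + (η - 2 / 3 * μ) * (∑ i, ∑ j, dv i i x * dv j j x) := fun x => by
      simp [Smat, Fin.sum_univ_three]; ring
    rw [a1]; simp_rw [a2]
    have J1 : ∀ i j, Integrable (fun x => dv i j x * dv i j x + dv i j x * dv j i x) volume :=
      fun i j => (I i j i j).add (I i j j i)
    rw [integral_add
      ((integrable_finsetSum _ fun i _ => integrable_finsetSum _ fun j _ => J1 i j).const_mul _)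
      ((integrable_finsetSum _ fun i _ => integrable_finsetSum _ fun j _ => I i i j j).const_mul _),
      integral_const_mul, integral_const_mul,
      integral_finsetSum _ (fun i _ => integrable_finsetSum _ fun j _ => J1 i j),
      integral_finsetSum _ (fun i _ => integrable_finsetSum _ fun j _ => I i i j j)]
    simp_rw [fun i => integral_finsetSum (μ := volume) Finset.univ
        (fun k (_ : k ∈ Finset.univ) => J1 i k), fun i => integral_finsetSum (μ := volume) Finset.univ
        (fun k (_ : k ∈ Finset.univ) => I i i k k), fun i j => integral_add (I i j i j) (I i j j i)]
  rw [← e]; linarith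
end


section
variable {v : Fin 3 → E3 → ℝ} {dv : Fin 3 → Fin 3 → E3 → ℝ} {vn : ℕ → Fin 3 → E3 → ℝ}
  {r : E3 → ℝ} {M : ℝ} {dg : Fin 3 → E3 → ℝ}

lemma pot_D_aux (hV : Vel v dv vn)
    (mass : ∀ φ : E3 → ℝ, ContDiff ℝ ((⊤ : ℕ∞) : WithTop ℕ∞) φ → HasCompactSupport φ →
      ∫ x, r x * (∑ i, v i x * pd φ i x) = 0)
    {q q' : ENNReal} [ENNReal.HolderConjugate q' q] (hrv : ∀ i, MemLp (fun x => r x * v i x) q' volume)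
    (hdg : ∀ i, MemLp (dg i) q volume) {Gn : ℕ → E3 → ℝ}
    (hGs : ∀ n, ContDiff ℝ ((⊤ : ℕ∞) : WithTop ℕ∞) (Gn n)) (hGc : ∀ n, HasCompactSupport (Gn n))
    (hGl : ∀ i, Tendsto (fun n => eLpNorm (fun x => pd (Gn n) i x - dg i x) q volume)
      atTop (𝓝 0)) :
    ∑ i, ∫ x, r x * dg i x * v i x = 0 := by
  have hGm : ∀ n i, MemLp (pd (Gn n) i) q volume := fun n i =>
    memLp_cc (pd_continuous (smooth_one (hGs n)) i) (pd_hasCompactSupport (hGc n) i) _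
  have T := tendsto_finsetSum Finset.univ fun i (_ : i ∈ Finset.univ) =>
    conv_Lp (p := q') (q := q) (hrv i) (hdg i) (fun n => hGm n i) (hGl i)
  have key : ∀ n, ∑ i, ∫ x, r x * v i x * pd (Gn n) i x = 0 := fun n => by
    rw [← mass (Gn n) (hGs n) (hGc n), ← integral_finsetSum]
    · congr 1; ext x; rw [Finset.mul_sum]
      exact Finset.sum_congr rfl fun i _ => by ring
    · intro i _; exact integrable_mul_Lp (p := q') (q := q) (hrv i) (hGm n i)
  simp_rw [key] at T
  have := tendsto_nhds_unique T tendsto_const_nhds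
  rw [← this]
  refine Finset.sum_congr rfl fun i _ => ?_
  congr 1; ext x; ring

lemma pot_D (hV : Vel v dv vn) (hrm : Measurable r) (hr : ∀ x, |r x| ≤ M)
    (mass : ∀ φ : E3 → ℝ, ContDiff ℝ ((⊤ : ℕ∞) : WithTop ℕ∞) φ → HasCompactSupport φ →
      ∫ x, r x * (∑ i, v i x * pd φ i x) = 0)
    {γ : ℝ} (hγ : 1 < γ) (hrL : MemLp r (ENNReal.ofReal γ) volume)
    {q : ℝ} (hq : 6 / 5 ≤ q) (hγq : γ * (5 * q - 6) ≤ 6 * q)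
    (hdg : ∀ i, MemLp (dg i) (ENNReal.ofReal q) volume) {Gn : ℕ → E3 → ℝ}
    (hGs : ∀ n, ContDiff ℝ ((⊤ : ℕ∞) : WithTop ℕ∞) (Gn n)) (hGc : ∀ n, HasCompactSupport (Gn n))
    (hGl : ∀ i, Tendsto (fun n => eLpNorm (fun x => pd (Gn n) i x - dg i x)
      (ENNReal.ofReal q) volume) atTop (𝓝 0)) :
    (∀ i, MemLp (fun x => r x * dg i x) (ENNReal.ofReal (6/5)) volume) ∧
    ∑ i, ∫ x, r x * dg i x * v i x = 0 := by
  rcases hq.eq_or_lt with rfl | hq'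
  · refine ⟨fun i => ?_, ?_⟩
    · have := memLp_bdd_mul (hdg i) hrm.aestronglyMeasurable (Eventually.of_forall hr)
      simpa [mul_comm] using this
    · have h65 := holder65.symm
      exact pot_D_aux hV mass (q' := 6) (q := ENNReal.ofReal (6/5)) (rv_L6 hV hrm hr) hdg hGs hGc hGl
  · have hd : 0 < 5 * q - 6 := by linarith
    have hq0 : 0 < q := by linarith
    set s : ℝ := 6 * q / (5 * q - 6) with hs
    have hs0 : 0 < s := by positivity
    have hsγ : γ ≤ s := by rw [hs, le_div_iff₀ hd]; exact hγq
    have hrs : MemLp r (ENNReal.ofReal s) volume := memLp_up (by linarith) hsγ hr hrL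
    have t1 := holderTriple_ofReal (a := s) (b := q) (c := 6/5) hs0 hq0 (by norm_num)
      (by rw [hs]; field_simp; ring)
    have hq1 : 0 < q - 1 := by linarith
    have t2 := holderTriple_ofReal (a := s) (b := 6) (c := q / (q - 1)) hs0 (by norm_num)
      (by positivity) (by rw [hs]; field_simp; ring)
    have t3 := holderTriple_ofReal (a := q / (q - 1)) (b := q) (c := 1)
      (by positivity) hq0 (by norm_num) (by field_simp; ring)
    have e6 : ENNReal.ofReal 6 = 6 := by simp
    rw [e6] at t2
    rw [ENNReal.ofReal_one] at t3
    refine ⟨fun i => ?_, ?_⟩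
    · exact (hdg i).mul (p := ENNReal.ofReal s) hrs
    · exact pot_D_aux hV mass (q' := ENNReal.ofReal (q / (q - 1))) (q := ENNReal.ofReal q)
        (fun i => (hV.L6 i).mul (p := ENNReal.ofReal s) hrs) hdg hGs hGc hGl

lemma moll_abs_bound {f : E3 → ℝ} {B : ℝ} (hB : ∀ᵐ x, |f x| ≤ B) (n : ℕ) (y : E3) :
    |cnv f (mker n) y| ≤ B := by
  have e : ∫ t, B * mker n (y - t) = B := by
    rw [integral_const_mul, integral_sub_left_eq_self (mker n) volume y, mker_integral, mul_one]
  conv_rhs => rw [← e]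
  unfold cnv
  rw [← Real.norm_eq_abs]
  refine norm_integral_le_of_norm_le ?_ ?_
  · refine Integrable.const_mul ?_ _
    exact (((mker_smooth n).continuous.integrable_of_hasCompactSupport
      (mker_compact n)).comp_sub_left y)
  · filter_upwards [hB] with t ht
    rw [norm_mul, Real.norm_of_nonneg (mker_nonneg n _)]
    exact mul_le_mul_of_nonneg_right ht (mker_nonneg n _)

/-- Testing the continuity equation with `ψ G`. -/
lemma pot_W_step {Ω : Set E3} (hΩ : IsOpen Ω) (hV : Vel v dv vn) (hrm : Measurable r)
    (hr : ∀ x, |r x| ≤ M)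
    (mass : ∀ φ : E3 → ℝ, ContDiff ℝ ((⊤ : ℕ∞) : WithTop ℕ∞) φ → HasCompactSupport φ →
      ∫ x, r x * (∑ i, v i x * pd φ i x) = 0)
    {g : E3 → ℝ} {B : ℝ} (hgl : LocallyIntegrable g volume) (hgB : ∀ᵐ x, |g x| ≤ B)
    (hdgl : ∀ i, LocallyIntegrable (dg i) volume) (hdgB : ∀ i, ∀ᵐ x, |dg i x| ≤ B)
    (hwk : ∀ φ : E3 → ℝ, IsTest Ω φ → ∀ i, ∫ x, g x * pd φ i x = - ∫ x, dg i x * φ x)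
    {ψ : E3 → ℝ} (hψ : IsTest Ω ψ) :
    ∑ i, ((∫ x, ψ x * dg i x * (r x * v i x)) + ∫ x, pd ψ i x * g x * (r x * v i x)) = 0 := by
  have h65 := holder65
  obtain ⟨hψs, hψc, hψΩ⟩ := hψ
  have hGs : ∀ n, ContDiff ℝ ((⊤ : ℕ∞) : WithTop ℕ∞) (cnv g (mker n)) := fun n =>
    cnv_smooth hgl (mker_smooth n) (mker_compact n)
  have hDs : ∀ n i, ContDiff ℝ ((⊤ : ℕ∞) : WithTop ℕ∞) (cnv (dg i) (mker n)) := fun n i =>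
    cnv_smooth (hdgl i) (mker_smooth n) (mker_compact n)
  have L1 : ∀ i, Tendsto (fun n => ∫ x, ψ x * cnv (dg i) (mker n) x * (r x * v i x)) atTop
      (𝓝 (∫ x, ψ x * dg i x * (r x * v i x))) := fun i =>
    conv_bdd (p := ENNReal.ofReal (6/5)) (q := 6) (C := B) (gn := fun _ x => r x * v i x)
      (cn := fun n => cnv (dg i) (mker n)) (memLp_cc hψs.continuous hψc _)
      (rv_L6 hV hrm hr i) (fun _ => rv_L6 hV hrm hr i) (by simp)
      (fun n => (hDs n i).continuous.aestronglyMeasurable)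
      (fun n => Eventually.of_forall fun x => moll_abs_bound (hdgB i) n x)
      (ae_moll_tendsto (hdgl i))
  have L2 : ∀ i, Tendsto (fun n => ∫ x, pd ψ i x * cnv g (mker n) x * (r x * v i x)) atTop
      (𝓝 (∫ x, pd ψ i x * g x * (r x * v i x))) := fun i =>
    conv_bdd (p := ENNReal.ofReal (6/5)) (q := 6) (C := B) (gn := fun _ x => r x * v i x)
      (cn := fun n => cnv g (mker n))
      (memLp_cc (pd_continuous (smooth_one hψs) i) (pd_hasCompactSupport hψc i) _)
      (rv_L6 hV hrm hr i) (fun _ => rv_L6 hV hrm hr i) (by simp)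
      (fun n => (hGs n).continuous.aestronglyMeasurable)
      (fun n => Eventually.of_forall fun x => moll_abs_bound hgB n x)
      (ae_moll_tendsto hgl)
  obtain ⟨δ, hδ, hthick⟩ := hψc.isCompact.exists_thickening_subset_open hΩ hψΩ
  have hpd : ∀ n, eps n < δ → ∀ i, ∀ y ∈ tsupport ψ, pd (cnv g (mker n)) i y
      = cnv (dg i) (mker n) y := by
    intro n hn i y hy
    rw [pd_cnv hgl (mker_smooth n) (mker_compact n)]
    have ht : IsTest Ω (fun t => mker n (y - t)) := by
      refine ⟨(mker_smooth n).comp (by fun_prop),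
        (mker_compact n).comp_homeomorph (Homeomorph.subLeft y), ?_⟩
      refine subset_trans ?_ hthick
      have h1 : tsupport (fun t => mker n (y - t)) ⊆ closedBall y (eps n) := by
        refine closure_minimal (fun t ht => ?_) isClosed_closedBall
        rw [mem_closedBall, dist_comm, dist_eq_norm]
        by_contra hc
        exact ht (mker_zero (not_le.1 hc))
      refine h1.trans fun t ht => ?_
      rw [mem_thickening_iff]
      exact ⟨y, hy, (mem_closedBall.1 ht).trans_lt hn⟩
    have h2 := hwk _ ht i
    simp_rw [pd_reflect (smooth_one (mker_smooth n)), mul_neg, integral_neg, neg_inj] at h2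
    exact h2
  have key : ∀ᶠ n in atTop, ∑ i, ((∫ x, ψ x * cnv (dg i) (mker n) x * (r x * v i x)) +
      ∫ x, pd ψ i x * cnv g (mker n) x * (r x * v i x)) = 0 := by
    filter_upwards [eps_tendsto.eventually (gt_mem_nhds hδ)] with n hn
    have m := mass (fun x => ψ x * cnv g (mker n) x) (hψs.mul (hGs n)) hψc.mul_right
    have hintg : ∀ {f : E3 → ℝ} (i : Fin 3), Continuous f → HasCompactSupport f →
        Integrable (fun x => f x * (r x * v i x)) volume := fun i hf hc =>
      integrable_mul_Lp (p := ENNReal.ofReal (6/5)) (q := 6) (memLp_cc hf hc _)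
        (rv_L6 hV hrm hr i)
    have J1 : ∀ i, Integrable (fun x => ψ x * cnv (dg i) (mker n) x * (r x * v i x)) volume :=
      fun i => hintg i (hψs.continuous.mul (hDs n i).continuous) hψc.mul_right
    have J2 : ∀ i, Integrable (fun x => pd ψ i x * cnv g (mker n) x * (r x * v i x)) volume :=
      fun i => hintg i ((pd_continuous (smooth_one hψs) i).mul (hGs n).continuous)
        (pd_hasCompactSupport hψc i).mul_right
    have J3 : ∀ i, Integrable (fun x => ψ x * cnv (dg i) (mker n) x * (r x * v i x) +
        pd ψ i x * cnv g (mker n) x * (r x * v i x)) volume := fun i => (J1 i).add (J2 i)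
    rw [← m]
    simp_rw [fun i => (integral_add (J1 i) (J2 i)).symm]
    rw [← integral_finsetSum _ (fun i _ => J3 i)]
    congr 1; ext x
    rw [Finset.mul_sum]
    refine Finset.sum_congr rfl fun i _ => ?_
    rw [pd_mul (hψs.differentiable (by norm_num) x) ((hGs n).differentiable (by norm_num) x)]
    by_cases hx : x ∈ tsupport ψ
    · rw [hpd n hn i x hx]; ring
    · rw [image_eq_zero_of_notMem_tsupport hx]; ring
  have T := tendsto_finsetSum Finset.univ fun i (_ : i ∈ Finset.univ) => (L1 i).add (L2 i)
  exact tendsto_nhds_unique (T.congr' key) tendsto_const_nhds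
end


section
variable {v : Fin 3 → E3 → ℝ} {dv : Fin 3 → Fin 3 → E3 → ℝ} {vn : ℕ → Fin 3 → E3 → ℝ}
  {r : E3 → ℝ} {M : ℝ} {dg : Fin 3 → E3 → ℝ}

/-- squared length of the velocity field -/
def sqv (w : Fin 3 → E3 → ℝ) (x : E3) : ℝ := ∑ k, (w k x) ^ 2

lemma sqv_nonneg (w : Fin 3 → E3 → ℝ) (x : E3) : 0 ≤ sqv w x :=
  Finset.sum_nonneg fun _ _ => sq_nonneg _

lemma sq_le_sqv (w : Fin 3 → E3 → ℝ) (k : Fin 3) (x : E3) : (w k x) ^ 2 ≤ sqv w x :=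
  Finset.single_le_sum (f := fun k => (w k x) ^ 2) (fun _ _ => sq_nonneg _) (Finset.mem_univ k)

lemma sqv_zero {w : Fin 3 → E3 → ℝ} {x : E3} (h : sqv w x = 0) (k : Fin 3) : w k x = 0 := by
  have := sq_le_sqv w k x
  rw [h] at this
  exact pow_eq_zero_iff two_ne_zero |>.1 (le_antisymm this (sq_nonneg _))

lemma sqv_pd {w : Fin 3 → E3 → ℝ} (hw : ∀ k, ContDiff ℝ ((⊤ : ℕ∞) : WithTop ℕ∞) (w k))
    {e : ℝ} (he : 0 < e) (i : Fin 3) (x : E3) :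
    pd (fun y => sqv w y / (sqv w y + e)) i x
      = ∑ k, 2 * w k x * e / (sqv w x + e) ^ 2 * pd (w k) i x := by
  have hpos : 0 < sqv w x + e := by have := sqv_nonneg w x; linarith
  have hd : ∀ k y, DifferentiableAt ℝ (w k) y := fun k y => (hw k).differentiable (by norm_num) y
  have hq : DifferentiableAt ℝ (sqv w) x := by
    unfold sqv
    exact DifferentiableAt.fun_sum fun k _ => (hd k x).pow 2
  have hh : HasDerivAt (fun s : ℝ => s / (s + e)) (e / (sqv w x + e) ^ 2) (sqv w x) := by
    have := (hasDerivAt_id' (sqv w x)).fun_div ((hasDerivAt_id' (sqv w x)).add_const e) hpos.ne'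
    exact this.congr_deriv (by ring)
  rw [pd_comp (h := fun s : ℝ => s / (s + e)) hq hh]
  have e1 : pd (sqv w) i x = ∑ k, 2 * w k x * pd (w k) i x := by
    have : sqv w = fun y => ∑ k, w k y * w k y := by ext y; simp [sqv, pow_two]
    rw [this, pd_sum _ (fun k _ => (hd k x).fun_mul (hd k x))]
    refine Finset.sum_congr rfl fun k _ => ?_
    rw [pd_mul (hd k x) (hd k x)]; ring
  rw [e1, Finset.mul_sum]
  refine Finset.sum_congr rfl fun k _ => ?_
  ring

lemma psi_le_one {q e : ℝ} (hq : 0 ≤ q) (he : 0 < e) : |q / (q + e)| ≤ 1 := by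
  rw [abs_of_nonneg (by positivity), div_le_one (by positivity)]; linarith

lemma coef_bd {a q e : ℝ} (ha : a ^ 2 ≤ q) (he : 0 < e) (he1 : e ≤ 1) :
    |2 * a * e / (q + e) ^ 2| ≤ 2 / e := by
  have hq : 0 ≤ q := (sq_nonneg a).trans ha
  rw [abs_div, abs_of_pos (show 0 < (q + e) ^ 2 by positivity), div_le_div_iff₀ (by positivity) he,
    abs_mul, abs_of_pos he, abs_mul, abs_two]
  have : |a| * e ≤ q + e := by
    have h1 : |a| ^ 2 ≤ q := by rwa [sq_abs]
    nlinarith [sq_nonneg (|a| - 1), abs_nonneg a, sq_nonneg (|a| - e)]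
  nlinarith [abs_nonneg a]

lemma coef2_bd {a b q e : ℝ} (hab : a ^ 2 ≤ q) (hb : b ^ 2 ≤ q) (he : 0 < e) :
    |2 * a * b * e / (q + e) ^ 2| ≤ 1 := by
  have hq : 0 ≤ q := (sq_nonneg a).trans hab
  rw [abs_div, abs_of_pos (show 0 < (q + e) ^ 2 by positivity), div_le_one (by positivity),
    abs_mul, abs_of_pos he, mul_assoc, abs_mul, abs_two]
  have : |a * b| ≤ q := by
    rw [abs_le]; constructor <;> nlinarith [sq_nonneg (a - b), sq_nonneg (a + b)]
  nlinarith [sq_nonneg (q - e), sq_nonneg q, sq_nonneg e]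

lemma pot_W {Ω : Set E3} (hΩ : IsOpen Ω) (hV : Vel v dv vn) (hrm : Measurable r)
    (hr : ∀ x, |r x| ≤ M) (hvΩ : ∀ n k, tsupport (vn n k) ⊆ Ω)
    (mass : ∀ φ : E3 → ℝ, ContDiff ℝ ((⊤ : ℕ∞) : WithTop ℕ∞) φ → HasCompactSupport φ →
      ∫ x, r x * (∑ i, v i x * pd φ i x) = 0)
    {g : E3 → ℝ} {B : ℝ} (hgl : LocallyIntegrable g volume) (hgB : ∀ᵐ x, |g x| ≤ B)
    (hdgl : ∀ i, LocallyIntegrable (dg i) volume) (hdgB : ∀ i, ∀ᵐ x, |dg i x| ≤ B)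
    (hwk : ∀ φ : E3 → ℝ, IsTest Ω φ → ∀ i, ∫ x, g x * pd φ i x = - ∫ x, dg i x * φ x)
    {γ : ℝ} (hγ : 1 < γ) (hγ' : γ ≤ 6 / 5) (hrL : MemLp r (ENNReal.ofReal γ) volume)
    (hK : ∀ i j, Integrable (fun x => r x * v i x * v j x) volume) :
    (∀ i, MemLp (fun x => r x * dg i x) (ENNReal.ofReal (6/5)) volume) ∧
    ∑ i, ∫ x, r x * dg i x * v i x = 0 := by
  have h65 := holder65
  have hr65 : MemLp r (ENNReal.ofReal (6/5)) volume := memLp_up (by linarith) hγ' hr hrL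
  have hr2 : MemLp r 2 volume := by
    have := memLp_up (b := 2) (by linarith) (by linarith) hr hrL
    simpa using this
  have hdgr : ∀ i, MemLp (fun x => r x * dg i x) (ENNReal.ofReal (6/5)) volume := fun i =>
    memLp_bdd_mul hr65 (hdgl i).aestronglyMeasurable (hdgB i)
  refine ⟨hdgr, ?_⟩
  have hrg : MemLp (fun x => r x * g x) 2 volume := memLp_bdd_mul hr2 hgl.aestronglyMeasurable hgB
  have hrgv : ∀ i, MemLp (fun x => r x * v i x * g x) 2 volume := fun i => by
    refine memLp_bdd_mul ?_ hgl.aestronglyMeasurable hgB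
    rw [memLp_two_iff_integrable_sq (rv_L6 hV hrm hr i).1]
    have := (hK i i).bdd_mul (c := M) hrm.aestronglyMeasurable (Eventually.of_forall hr)
    refine this.congr (Eventually.of_forall fun x => ?_)
    simp only; ring
  have hqc : ∀ n, Continuous (sqv (vn n)) := fun n => by
    unfold sqv
    exact continuous_finsetSum _ fun k _ => ((hV.smooth n k).continuous).pow 2
  have hqm : Measurable (sqv v) := by
    unfold sqv
    exact Finset.measurable_fun_sum _ fun k _ => (hV.meas k).pow_const 2
  have hqae : ∀ᵐ x, Tendsto (fun n => sqv (vn n) x) atTop (𝓝 (sqv v x)) := by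
    filter_upwards [ae_all_iff.2 hV.ae] with x hx
    exact tendsto_finsetSum _ fun k _ => (hx k).pow 2
  -- step at fixed `e`
  have step : ∀ e : ℝ, 0 < e → e ≤ 1 →
      ∑ i, ((∫ x, r x * dg i x * (sqv v x / (sqv v x + e)) * v i x) +
        ∑ k, ∫ x, r x * v i x * g x * (2 * v k x * e / (sqv v x + e) ^ 2) * dv k i x) = 0 := by
    intro e he he1
    have hp1 : ∀ (w : Fin 3 → E3 → ℝ) x, 0 < sqv w x + e := fun w x => by
      have := sqv_nonneg w x; linarith
    have c1 : ∀ i, Tendsto (fun n => ∫ x, r x * dg i x * (sqv (vn n) x / (sqv (vn n) x + e)) * v i x)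
        atTop (𝓝 (∫ x, r x * dg i x * (sqv v x / (sqv v x + e)) * v i x)) := fun i =>
      conv_bdd (p := ENNReal.ofReal (6/5)) (q := 6) (C := 1) (gn := fun _ => v i)
        (cn := fun n x => sqv (vn n) x / (sqv (vn n) x + e)) (hdgr i) (hV.L6 i) (fun _ => hV.L6 i)
        (by simp)
        (fun n => ((hqc n).div ((hqc n).add continuous_const)
          fun x => (hp1 _ x).ne').aestronglyMeasurable)
        (fun n => Eventually.of_forall fun x => psi_le_one (sqv_nonneg _ x) he)
        (by
          filter_upwards [hqae] with x hx
          exact hx.div (hx.add tendsto_const_nhds) (hp1 v x).ne')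
    have hcc : ∀ n k, Continuous fun x => 2 * vn n k x * e / (sqv (vn n) x + e) ^ 2 := fun n k =>
      ((continuous_const.mul (hV.smooth n k).continuous).mul continuous_const).div
        (((hqc n).add continuous_const).pow 2) fun x => (pow_pos (hp1 _ x) 2).ne'
    have c2 : ∀ i k, Tendsto (fun n => ∫ x, r x * v i x * g x *
          (2 * vn n k x * e / (sqv (vn n) x + e) ^ 2) * pd (vn n k) i x)
        atTop (𝓝 (∫ x, r x * v i x * g x * (2 * v k x * e / (sqv v x + e) ^ 2) * dv k i x)) :=
      fun i k =>
      conv_bdd (p := 2) (q := 2) (C := 2 / e) (gn := fun n => pd (vn n k) i)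
        (cn := fun n x => 2 * vn n k x * e / (sqv (vn n) x + e) ^ 2) (hrgv i) (hV.dL2 k i)
        (fun n => hV.memLp_pd n k i _) (hV.lim2 k i)
        (fun n => (hcc n k).aestronglyMeasurable)
        (fun n => Eventually.of_forall fun x => coef_bd (sq_le_sqv _ k x) he he1)
        (by
          filter_upwards [hqae, hV.ae k] with x hx hk
          exact ((hk.const_mul 2).mul_const e).div ((hx.add tendsto_const_nhds).pow 2)
            (pow_pos (hp1 v x) 2).ne')
    have T := tendsto_finsetSum Finset.univ fun i (_ : i ∈ Finset.univ) =>
      (c1 i).add (tendsto_finsetSum Finset.univ fun k (_ : k ∈ Finset.univ) => c2 i k)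
    refine tendsto_nhds_unique (T.congr fun n => ?_) tendsto_const_nhds
    have hq0 : ∀ x, x ∉ ⋃ k, tsupport (vn n k) → sqv (vn n) x / (sqv (vn n) x + e) = 0 := by
      intro x hx
      simp only [mem_iUnion, not_exists] at hx
      have : sqv (vn n) x = 0 := by
        unfold sqv
        exact Finset.sum_eq_zero fun k _ => by
          rw [image_eq_zero_of_notMem_tsupport (hx k)]; simp
      simp [this]
    have hsub : tsupport (fun x => sqv (vn n) x / (sqv (vn n) x + e)) ⊆ ⋃ k, tsupport (vn n k) := by
      refine closure_minimal (fun x hx => ?_)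
        (isClosed_iUnion_of_finite fun k => isClosed_tsupport _)
      by_contra hc; exact hx (hq0 x hc)
    have hqs : ContDiff ℝ ((⊤ : ℕ∞) : WithTop ℕ∞) (sqv (vn n)) := by
      unfold sqv
      exact ContDiff.sum fun k _ => (hV.smooth n k).pow 2
    have hψ : IsTest Ω (fun x => sqv (vn n) x / (sqv (vn n) x + e)) := by
      refine ⟨hqs.div (hqs.add contDiff_const) fun x => (hp1 _ x).ne', ?_, ?_⟩
      · exact (isCompact_iUnion fun k => (hV.cpt n k).isCompact).of_isClosed_subset
          (isClosed_tsupport _) hsub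
      · exact hsub.trans (iUnion_subset fun k => hvΩ n k)
    rw [← pot_W_step hΩ hV hrm hr mass hgl hgB hdgl hdgB hwk hψ]
    refine Finset.sum_congr rfl fun i _ => ?_
    congr 1
    · congr 1; ext x; ring
    · rw [← integral_finsetSum]
      · congr 1; ext x
        rw [sqv_pd (hV.smooth n) he, Finset.sum_mul, Finset.sum_mul]
        exact Finset.sum_congr rfl fun k _ => by ring
      · intro k _
        exact integrable_mul_Lp (p := 2) (q := 2) (memLp_bdd_mul (hrgv i)
          (hcc n k).aestronglyMeasurable (Eventually.of_forall fun x =>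
            coef_bd (sq_le_sqv _ k x) he he1)) (hV.memLp_pd n k i _)
  have hp1 : ∀ m x, 0 < sqv v x + eps m := fun m x => by
    have := sqv_nonneg v x; have := eps_pos m; linarith
  have d1 : ∀ i, Tendsto (fun m => ∫ x, r x * dg i x * (sqv v x / (sqv v x + eps m)) * v i x)
      atTop (𝓝 (∫ x, r x * dg i x * (if sqv v x = 0 then 0 else 1) * v i x)) := fun i =>
    conv_bdd (p := ENNReal.ofReal (6/5)) (q := 6) (C := 1) (gn := fun _ => v i)
      (cn := fun m x => sqv v x / (sqv v x + eps m)) (hdgr i) (hV.L6 i) (fun _ => hV.L6 i)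
      (by simp)
      (fun m => (hqm.div (hqm.add_const _)).aestronglyMeasurable)
      (fun m => Eventually.of_forall fun x => psi_le_one (sqv_nonneg _ x) (eps_pos m))
      (by
        refine Eventually.of_forall fun x => ?_
        by_cases h : sqv v x = 0
        · simp [h]
        · simp only [h, if_false]
          have := (tendsto_const_nhds (x := sqv v x)).div
            ((tendsto_const_nhds (x := sqv v x)).add eps_tendsto) (by simpa using h)
          rw [add_zero, div_self h] at this
          exact this)
  have d2 : ∀ i k, Tendsto (fun m => ∫ x, r x * g x *
        (2 * v i x * v k x * eps m / (sqv v x + eps m) ^ 2) * dv k i x)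
      atTop (𝓝 (∫ x, r x * g x * 0 * dv k i x)) := fun i k =>
    conv_bdd (p := 2) (q := 2) (C := 1) (gn := fun _ => dv k i) (c := fun _ => 0)
      (cn := fun m x => 2 * v i x * v k x * eps m / (sqv v x + eps m) ^ 2) hrg (hV.dL2 k i)
      (fun _ => hV.dL2 k i) (by simp)
      (fun m => ((((((hV.meas i).const_mul 2).mul (hV.meas k)).mul_const _).div
        ((hqm.add_const _).pow_const 2))).aestronglyMeasurable)
      (fun m => Eventually.of_forall fun x =>
        coef2_bd (sq_le_sqv _ i x) (sq_le_sqv _ k x) (eps_pos m))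
      (by
        refine Eventually.of_forall fun x => ?_
        by_cases h : sqv v x = 0
        · simp [sqv_zero h]
        · have := ((tendsto_const_nhds (x := 2 * v i x * v k x)).mul eps_tendsto).div
            (((tendsto_const_nhds (x := sqv v x)).add eps_tendsto).pow 2) (by simpa using h)
          rw [mul_zero, zero_div] at this
          exact this)
  have T := tendsto_finsetSum Finset.univ fun i (_ : i ∈ Finset.univ) =>
    (d1 i).add (tendsto_finsetSum Finset.univ fun k (_ : k ∈ Finset.univ) => d2 i k)
  have z : ∑ i, ((∫ x, r x * dg i x * (if sqv v x = 0 then 0 else 1) * v i x) +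
      ∑ k, ∫ x, r x * g x * 0 * dv k i x) = 0 := by
    refine tendsto_nhds_unique (T.congr fun m => ?_) tendsto_const_nhds
    rw [← step (eps m) (eps_pos m) (eps_le_one m)]
    refine Finset.sum_congr rfl fun i _ => ?_
    congr 1
    refine Finset.sum_congr rfl fun k _ => ?_
    congr 1; ext x; ring
  rw [← z]
  refine Finset.sum_congr rfl fun i _ => ?_
  simp only [mul_zero, zero_mul, integral_zero, Finset.sum_const_zero, add_zero]
  congr 1; ext x
  by_cases h : sqv v x = 0
  · simp [sqv_zero h]
  · simp [h]
end


section
variable {Ω : Set E3}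

lemma glob_int (hΩ : MeasurableSet Ω) {f g : E3 → ℝ}
    (h : ∀ᵐ x ∂(volume.restrict Ω), f x = g x) (h0 : ∀ x, x ∉ Ω → f x = 0) :
    ∫ x, f x = ∫ x in Ω, g x := by
  rw [← setIntegral_eq_integral_of_forall_compl_eq_zero h0]
  exact integral_congr_ae h

lemma glob_integrable (hΩ : MeasurableSet Ω) {f g : E3 → ℝ}
    (h : ∀ᵐ x ∂(volume.restrict Ω), f x = g x) (h0 : ∀ x, x ∉ Ω → f x = 0)
    (hg : IntegrableOn g Ω volume) : Integrable f volume := by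
  have h1 : IntegrableOn f Ω volume := hg.congr (h.mono fun x hx => hx.symm)
  have h2 := (integrable_indicator_iff hΩ).2 h1
  refine h2.congr (Eventually.of_forall fun x => ?_)
  by_cases hx : x ∈ Ω
  · simp [hx]
  · simp [hx, h0 x hx]

lemma glob_eLpNorm (hΩ : MeasurableSet Ω) {X f : E3 → ℝ} (h0 : ∀ x, x ∉ Ω → X x = 0) (p : ENNReal) :
    eLpNorm (fun x => X x - Ω.indicator f x) p volume
      = eLpNorm (fun x => X x - f x) p (volume.restrict Ω) := by
  rw [← eLpNorm_indicator_eq_eLpNorm_restrict hΩ]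
  congr 1; ext x
  by_cases hx : x ∈ Ω
  · simp [hx]
  · simp [hx, h0 x hx]

lemma ae_glob (hΩ : MeasurableSet Ω) {Q : E3 → Prop} (h : ∀ᵐ x ∂(volume.restrict Ω), Q x)
    (h0 : ∀ x, x ∉ Ω → Q x) : ∀ᵐ x, Q x := by
  rw [ae_restrict_iff' hΩ] at h
  filter_upwards [h] with x hx
  by_cases hx' : x ∈ Ω
  · exact hx hx'
  · exact h0 x hx'

lemma memLp_top_bd {α F : Type*} [MeasurableSpace α] [NormedAddCommGroup F] {ν : Measure α}
    {f : α → F} (h : MemLp f ⊤ ν) : ∃ B, 0 ≤ B ∧ ∀ᵐ x ∂ν, ‖f x‖ ≤ B := by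
  refine ⟨(eLpNorm f ⊤ ν).toReal, ENNReal.toReal_nonneg, ?_⟩
  have h1 := ae_le_eLpNormEssSup (f := f) (μ := ν)
  filter_upwards [h1] with x hx
  rw [← toReal_enorm]
  refine ENNReal.toReal_mono h.2.ne ?_
  rwa [eLpNorm_exponent_top]

lemma tsupport_comp_sub (φ : E3 → Fin 3 → ℝ) (i : Fin 3) :
    tsupport (fun x => φ x i) ⊆ tsupport φ := by
  refine closure_mono fun x hx => ?_
  intro h
  exact hx (by simp [h])

lemma testvec_comp {φ : E3 → Fin 3 → ℝ} (h : IsTestVec ((⊤ : ℕ∞) : WithTop ℕ∞) Ω φ) (i : Fin 3) :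
    IsTest Ω (fun x => φ x i) := by
  obtain ⟨h1, h2, h3⟩ := h
  refine ⟨contDiff_pi.1 h1 i, ?_, (tsupport_comp_sub φ i).trans h3⟩
  exact h2.isCompact.of_isClosed_subset (isClosed_tsupport _) (tsupport_comp_sub φ i)

lemma test_zero {φ : E3 → ℝ} (h : IsTest Ω φ) {x : E3} (hx : x ∉ Ω) : φ x = 0 :=
  image_eq_zero_of_notMem_tsupport fun h' => hx (h.2.2 h')

lemma test_pd_zero {φ : E3 → ℝ} (h : IsTest Ω φ) (i : Fin 3) {x : E3} (hx : x ∉ Ω) :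
    pd φ i x = 0 :=
  image_eq_zero_of_notMem_tsupport fun h' => hx (h.2.2 (pd_tsupport i h'))

lemma exists_vel (hΩ : IsOpen Ω) {u um : E3 → Fin 3 → ℝ} {du : E3 → Fin 3 → Fin 3 → ℝ}
    (hum : Measurable um) (hu : u =ᵐ[volume] um) (hD : MemD012 Ω u du) :
    ∃ un : ℕ → E3 → Fin 3 → ℝ, (∀ n, IsTestVec ((⊤ : ℕ∞) : WithTop ℕ∞) Ω (un n)) ∧
      Vel (fun i => Ω.indicator fun x => um x i) (fun i j => Ω.indicator fun x => du x i j)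
        (fun n i x => un n x i) := by
  obtain ⟨-, -, hdu, un, ht, hl2, hl6⟩ := hD
  have hΩm := hΩ.measurableSet
  have hur : u =ᵐ[volume.restrict Ω] um := ae_restrict_of_ae hu
  have hl6' : Tendsto (fun n => eLpNorm (un n - um) 6 (volume.restrict Ω)) atTop (𝓝 0) := by
    refine hl6.congr fun n => eLpNorm_congr_ae ?_
    filter_upwards [hur] with x hx
    simp [hx]
  have hunm : ∀ n, AEStronglyMeasurable (un n) (volume.restrict Ω) := fun n =>
    (ht n).1.continuous.aestronglyMeasurable
  have hTM := tendstoInMeasure_of_tendsto_eLpNorm (by norm_num) hunm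
    hum.aestronglyMeasurable hl6'
  obtain ⟨ns, hns, hae⟩ := hTM.exists_seq_tendsto_ae
  have hns' := hns.tendsto_atTop
  have hT : ∀ n i, IsTest Ω (fun x => un n x i) := fun n i => testvec_comp (ht n) i
  refine ⟨fun n => un (ns n), fun n => ht _, ?_⟩
  have lim6 : ∀ i, Tendsto (fun n => eLpNorm (fun x => un n x i - Ω.indicator (fun x => um x i) x)
      6 volume) atTop (𝓝 0) := by
    intro i
    refine tendsto_of_tendsto_of_tendsto_of_le_of_le tendsto_const_nhds hl6'
      (fun n => zero_le) fun n => ?_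
    simp only
    rw [glob_eLpNorm hΩm (fun x hx => test_zero (hT n i) hx)]
    exact eLpNorm_mono fun x => norm_le_pi_norm ((un n - um) x) i
  constructor
  · intro i
    exact ((measurable_pi_apply i).comp hum).indicator hΩm
  · intro i
    obtain ⟨n, hn⟩ := ((lim6 i).eventually (gt_mem_nhds one_pos)).exists
    have h1 : MemLp (fun x => un n x i - Ω.indicator (fun x => um x i) x) 6 volume :=
      ⟨((hT n i).1.continuous.aestronglyMeasurable.sub
        (((measurable_pi_apply i).comp hum).indicator hΩm).aestronglyMeasurable),
        hn.trans ENNReal.one_lt_top⟩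
    have h2 := (memLp_cc (hT n i).1.continuous (hT n i).2.1 6).sub h1
    refine h2.congr_norm (((measurable_pi_apply i).comp hum).indicator hΩm).aestronglyMeasurable
      (Eventually.of_forall fun x => ?_)
    simp
  · intro i j
    rw [memLp_indicator_iff_restrict hΩm]
    exact (hdu.eval i).eval j
  · exact fun n i => (hT _ i).1
  · exact fun n i => (hT _ i).2.1
  · exact fun i => (lim6 i).comp hns'
  · intro i j
    have : Tendsto (fun n => eLpNorm (fun x => pd (fun y => un n y i) j x -
        Ω.indicator (fun x => du x i j) x) 2 volume) atTop (𝓝 0) := by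
      refine tendsto_of_tendsto_of_tendsto_of_le_of_le tendsto_const_nhds hl2
        (fun n => zero_le) fun n => ?_
      simp only
      rw [glob_eLpNorm hΩm (fun x hx => test_pd_zero (hT n i) j hx)]
      exact eLpNorm_mono fun x => (norm_le_pi_norm ((tgrad (un n) x - du x) i) j).trans
        (norm_le_pi_norm (tgrad (un n) x - du x) i)
    exact this.comp hns'
  · intro i
    refine ae_glob hΩm ?_ ?_
    · filter_upwards [hae, ae_restrict_mem hΩm] with x hx hxΩ
      rw [indicator_of_mem hxΩ]
      exact (tendsto_pi_nhds.1 hx) i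
    · intro x hx
      simp only [indicator_of_notMem hx, test_zero (hT _ i) hx]
      exact tendsto_const_nhds
end


theorem liouville_finite_energy
    (Ω : Set E3) (hΩ_open : IsOpen Ω) (hΩ_conn : IsConnected Ω)
    (μ η : ℝ) (hμ : 0 < μ) (hη : 0 ≤ η)
    (p p' P P' : ℝ → ℝ) (γ : ℝ) (hγ : 1 < γ)
    (G : E3 → ℝ) (dG : E3 → Fin 3 → ℝ)
    (ρ : E3 → ℝ) (u : E3 → Fin 3 → ℝ) (du : E3 → Fin 3 → Fin 3 → ℝ)
    (hp_cont : ContinuousOn p (Ici 0)) (hp0 : p 0 = 0)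
    (hp_nonneg : ∀ s, 0 ≤ s → 0 ≤ p s)
    (hp_deriv : ∀ s, 0 < s → HasDerivAt p (p' s) s)
    (hp'_cont : ContinuousOn p' (Ioi 0))
    (hp'_nonneg : ∀ s, 0 < s → 0 ≤ p' s)
    (hP0 : P 0 = 0)
    (hP_deriv : ∀ s, 0 < s → HasDerivAt P (P' s) s)
    (hP'_cont : ContinuousOn P' (Ioi 0))
    (hP_ode : ∀ s, 0 < s → s * P' s - P s = p s)
    (hliminf1 : ∃ c > 0, ∀ᶠ s in 𝓝[>] (0 : ℝ), c ≤ P s / p s)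
    (hliminf2 : ∃ c > 0, ∀ᶠ s in 𝓝[>] (0 : ℝ), c ≤ p s / s ^ γ)
    (hG : (6 / 5 < γ ∧ ∃ q : ℝ, 6 / 5 ≤ q ∧ q ≤ 6 * γ / (5 * γ - 6) ∧ MemD01q Ω G dG q) ∨
          (γ ≤ 6 / 5 ∧ ((∃ q : ℝ, 6 / 5 ≤ q ∧ MemD01q Ω G dG q) ∨ MemW1inf Ω G dG)))
    (hsol : WeakSolution Ω μ η p G dG ρ u du)
    (hρ_top : MemLp ρ ⊤ (volume.restrict Ω))
    (henergy : IntegrableOn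
      (fun x => (1 / 2) * ρ x * (∑ i, (u x i) ^ 2) + P (ρ x)) Ω volume) :
    ∀ᵐ x ∂(volume.restrict Ω), u x = 0 := by
  have hΩm := hΩ_open.measurableSet
  obtain ⟨M, hM0, hMρ⟩ := memLp_top_bd hρ_top
  obtain ⟨ρm, hρm, hρe⟩ := hsol.aemeas_ρ
  obtain ⟨um, hum, hue⟩ := hsol.aemeas_u
  obtain ⟨un, hun, hV⟩ := exists_vel hΩ_open hum hue hsol.u_D012
  have hT : ∀ n i, IsTest Ω (fun x => un n x i) := fun n i => testvec_comp (hun n) i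
  set v : Fin 3 → E3 → ℝ := fun i => Ω.indicator fun x => um x i with hv
  set dv : Fin 3 → Fin 3 → E3 → ℝ := fun i j => Ω.indicator fun x => du x i j with hdv
  set vn : ℕ → Fin 3 → E3 → ℝ := fun n i x => un n x i with hvn
  set r : E3 → ℝ := Ω.indicator fun x => min (max (ρm x) 0) M with hrdef
  set dg : Fin 3 → E3 → ℝ := fun i => Ω.indicator fun x => dG x i with hdgdef
  have hrm : Measurable r := ((hρm.max measurable_const).min measurable_const).indicator hΩm
  have hr0 : ∀ x, 0 ≤ r x := fun x =>
    indicator_nonneg (fun y _ => le_min (le_max_right _ _) hM0) x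
  have hrM : ∀ x, r x ≤ M := fun x =>
    indicator_le' (fun y _ => min_le_right _ _) (fun _ _ => hM0) x
  have hr := abs_le_of_bds hr0 hrM
  have hroff : ∀ x, x ∉ Ω → r x = 0 := fun x hx => indicator_of_notMem hx _
  have hrρ : ∀ᵐ x ∂(volume.restrict Ω), r x = ρ x := by
    filter_upwards [ae_restrict_mem hΩm, hMρ, hsol.ρ_nonneg, ae_restrict_of_ae hρe] with x h1 h2 h3 h4
    rw [hrdef, indicator_of_mem h1, ← h4, max_eq_left h3, min_eq_left]
    exact (le_abs_self _).trans h2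
  have hvu : ∀ᵐ x ∂(volume.restrict Ω), ∀ i, v i x = u x i := by
    filter_upwards [ae_restrict_mem hΩm, ae_restrict_of_ae hue] with x h1 h2 i
    simp only [hv, indicator_of_mem h1, h2]
  have hdvu : ∀ᵐ x ∂(volume.restrict Ω), ∀ i j, dv i j x = du x i j := by
    filter_upwards [ae_restrict_mem hΩm] with x h1 i j
    simp only [hdv, indicator_of_mem h1]
  have hdgG : ∀ᵐ x ∂(volume.restrict Ω), ∀ i, dg i x = dG x i := by
    filter_upwards [ae_restrict_mem hΩm] with x h1 i
    simp only [hdgdef, indicator_of_mem h1]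
  have mass : ∀ φ : E3 → ℝ, ContDiff ℝ ((⊤ : ℕ∞) : WithTop ℕ∞) φ → HasCompactSupport φ →
      ∫ x, r x * (∑ i, v i x * pd φ i x) = 0 := by
    intro φ h1 h2
    rw [← hsol.mass φ h1 h2]
    refine glob_int hΩm ?_ fun x hx => by rw [hroff x hx, zero_mul]
    filter_upwards [hrρ, hvu] with x a b
    simp only [a, b]
  have hE : Integrable (fun x => (1 / 2) * r x * (∑ i, (v i x) ^ 2) + P (r x)) volume := by
    refine glob_integrable hΩm ?_ (fun x hx => by rw [hroff x hx, hP0]; simp) henergy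
    filter_upwards [hrρ, hvu] with x a b
    simp only [a, b]
  have hmom : ∀ n, ∫ x, ((∑ i, ∑ j, r x * v i x * v j x * pd (vn n i) j x)
        + p (r x) * (∑ i, pd (vn n i) i x))
      = (∫ x, ∑ i, ∑ j, Smat μ η (fun a b => dv a b x) i j * pd (vn n i) j x)
        - ∫ x, ∑ i, r x * dg i x * vn n i x := by
    intro n
    have h1 : IsTestVec 1 Ω (un n) := ⟨(hun n).1.of_le (by exact_mod_cast le_top), (hun n).2⟩
    have h2 := hsol.momentum (un n) h1
    have e1 : ∫ x, ((∑ i, ∑ j, r x * v i x * v j x * pd (vn n i) j x)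
        + p (r x) * (∑ i, pd (vn n i) i x)) = _ :=
      glob_int hΩm (g := fun x => (∑ i, ∑ j, ρ x * u x i * u x j * tgrad (un n) x i j)
        + p (ρ x) * (∑ i, tgrad (un n) x i i))
        (by
          filter_upwards [hrρ, hvu] with x a b
          simp only [a, b]; rfl)
        (fun x hx => by rw [hroff x hx, hp0]; simp)
    have e2 : ∫ x, ∑ i, ∑ j, Smat μ η (fun a b => dv a b x) i j * pd (vn n i) j x = _ :=
      glob_int hΩm (g := fun x => ∑ i, ∑ j, Smat μ η (du x) i j * tgrad (un n) x i j)
        (by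
          filter_upwards [hdvu] with x a
          simp only [a]; rfl)
        (fun x hx => by
          refine Finset.sum_eq_zero fun i _ => Finset.sum_eq_zero fun j _ => ?_
          rw [show pd (vn n i) j x = 0 from test_pd_zero (hT n i) j hx, mul_zero])
    have e3 : ∫ x, ∑ i, r x * dg i x * vn n i x = _ :=
      glob_int hΩm (g := fun x => ∑ i, ρ x * dG x i * un n x i)
        (by
          filter_upwards [hrρ, hdgG] with x a b
          simp only [a, b]; rfl)
        (fun x hx => by rw [hroff x hx]; simp)
    rw [e1, e2, e3]
    exact h2
  obtain ⟨C, hC, hsc⟩ := scalar_facts hγ hp_cont hp0 hp_nonneg hp_deriv hp'_nonneg hP0 hP_deriv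
    hP_ode hliminf1 hliminf2 hM0
  obtain ⟨hpL, hrL, hK⟩ := energy_facts hV hrm hr0 hrM hγ hC hp_cont hp_nonneg hsc hE
  obtain ⟨hL2, hconv⟩ := convective hV hrm hr0 hrM mass hK
  have hpdiv := press_div hV hrm hr0 hrM mass hp_cont hp0 hp_deriv hp'_cont hp'_nonneg
    (fin_meas hr0 hγ hrL) hpL
  have hD : ∀ q : ℝ, 6 / 5 ≤ q → γ * (5 * q - 6) ≤ 6 * q → MemD01q Ω G dG q →
      (∀ i, MemLp (fun x => r x * dg i x) (ENNReal.ofReal (6/5)) volume) ∧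
      ∑ i, ∫ x, r x * dg i x * v i x = 0 := by
    rintro q hq hγq ⟨-, hdG, Gn, hGn, hGl, -⟩
    refine pot_D hV hrm hr mass hγ hrL hq hγq (Gn := Gn) (fun i => ?_) (fun n => (hGn n).1)
      (fun n => (hGn n).2.1) fun i => ?_
    · rw [hdgdef, memLp_indicator_iff_restrict hΩm]
      exact hdG.eval i
    · refine tendsto_of_tendsto_of_tendsto_of_le_of_le tendsto_const_nhds hGl
        (fun n => zero_le) fun n => ?_
      simp only [hdgdef]
      rw [glob_eLpNorm hΩm (fun x hx => test_pd_zero (hGn n) i hx)]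
      exact eLpNorm_mono fun x => norm_le_pi_norm ((fun i => pd (Gn n) i x) - dG x) i
  have hpot : (∀ i, MemLp (fun x => r x * dg i x) (ENNReal.ofReal (6/5)) volume) ∧
      ∑ i, ∫ x, r x * dg i x * v i x = 0 := by
    rcases hG with ⟨h1, q, hq, hq2, hGq⟩ | ⟨h1, ⟨q, hq, hGq⟩ | hW⟩
    · refine hD q hq ?_ hGq
      rw [le_div_iff₀ (by linarith)] at hq2
      nlinarith
    · refine hD q hq ?_ hGq
      nlinarith
    · obtain ⟨hwk, hGt, hdGt⟩ := hW
      obtain ⟨B1, hB1, hGB⟩ := memLp_top_bd hGt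
      obtain ⟨B2, hB2, hdGB⟩ := memLp_top_bd hdGt
      refine pot_W hΩ_open hV hrm hr (fun n k => (hT n k).2.2) mass (g := Ω.indicator G)
        (B := max B1 B2) ?_ ?_ ?_ ?_ ?_ hγ h1 hrL hK
      · exact ((memLp_indicator_iff_restrict hΩm).2 hGt).locallyIntegrable le_top
      · refine ae_glob hΩm ?_ fun x hx => ?_
        · filter_upwards [hGB, ae_restrict_mem hΩm] with x h2 h3
          rw [indicator_of_mem h3]
          exact h2.trans (le_max_left _ _)
        · rw [indicator_of_notMem hx, abs_zero]
          exact hB1.trans (le_max_left _ _)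
      · intro i
        exact ((memLp_indicator_iff_restrict hΩm).2 (hdGt.eval i)).locallyIntegrable le_top
      · intro i
        refine ae_glob hΩm ?_ fun x hx => ?_
        · filter_upwards [hdGB, hdgG] with x h2 h3
          rw [h3]
          exact (norm_le_pi_norm (dG x) i).trans (h2.trans (le_max_right _ _))
        · simp only [hdgdef, indicator_of_notMem hx, abs_zero]
          exact hB1.trans (le_max_left _ _)
      · intro φ hφ i
        have e1 : ∫ x, Ω.indicator G x * pd φ i x = ∫ x in Ω, G x * pd φ i x :=
          glob_int hΩm (by
            filter_upwards [ae_restrict_mem hΩm] with x h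
            rw [indicator_of_mem h]) fun x hx => by rw [indicator_of_notMem hx, zero_mul]
        have e2 : ∫ x, dg i x * φ x = ∫ x in Ω, dG x i * φ x :=
          glob_int hΩm (by
            filter_upwards [hdgG] with x h
            rw [h]) fun x hx => by rw [test_zero hφ hx, mul_zero]
        rw [e1, e2]
        exact hwk φ hφ i
  have hS := momentum_limit hV hL2 hconv hpL hpdiv hpot.1 hpot.2 hmom
  have hv0 := hV.v_zero (hV.dv_zero hμ hη hS)
  have hv0' := ae_restrict_of_ae (s := Ω) (ae_all_iff.2 hv0)
  filter_upwards [hv0', hvu] with x h1 h2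
  ext i
  rw [← h2 i, h1 i]
  rfl
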